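/- arXiv:0804.2012 — 9 statements merged into one kernel-verified Lean document; each statement's English description precedes it below -/
import Mathlib

section
/- Let R be a commutative local ring with maximal ideal m, and let A be an R-algebra that is finitely generated as an R-module. If e is an idempotent of A whose image in the quotient algebra A/mA is central, then e is central in A. -/
theorem aux_proj_zero
    (R : Type*) [CommRing R] [IsLocalRing R]
    (A : Type*) [AddCommGroup A] [Module R A] [Module.Finite R A]
    (f : A →ₗ[R] A) (hf : ∀ a, f (f a) = f a)
    (hm : ∀ a, f a ∈ (IsLocalRing.maximalIdeal R) • (⊤ : Submodule R A)) (a : A) : f a = 0 := by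
  have hfg : (LinearMap.range f).FG := by
    rw [LinearMap.range_eq_map]
    exact Module.Finite.fg_top.map f
  have hle : LinearMap.range f ≤ IsLocalRing.maximalIdeal R • LinearMap.range f := by
    rintro _ ⟨b, rfl⟩
    have h := Submodule.mem_map_of_mem (f := f) (hm b)
    rw [Submodule.map_smul'', hf, ← LinearMap.range_eq_map] at h
    exact h
  have h0 := Submodule.eq_bot_of_le_smul_of_le_jacobson_bot _ _ hfg hle
    (IsLocalRing.maximalIdeal_le_jacobson _)
  have : f a ∈ LinearMap.range f := ⟨a, rfl⟩
  rw [h0] at this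
  exact this

/-- Let `R` be a commutative local ring with maximal ideal `m`, and let `A` be
an `R`-algebra that is finitely generated as an `R`-module. If `e` is an idempotent of `A`
whose image in the quotient algebra `A/mA` is central (i.e. all its commutators lie in
`mA = m • A`), then `e` is central in `A`. -/
theorem central_of_central_mod_maximalIdeal
    (R : Type*) [CommRing R] [IsLocalRing R]
    (A : Type*) [Ring A] [Algebra R A] [Module.Finite R A]
    (e : A) (he : IsIdempotentElem e)
    (hbar : ∀ a : A, e * a - a * e ∈ (IsLocalRing.maximalIdeal R) • (⊤ : Submodule R A)) :
    ∀ a : A, e * a = a * e := by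
  have hee : e * e = e := he
  intro a
  have h1 := aux_proj_zero R A
    ((LinearMap.mulLeft R e).comp (LinearMap.mulRight R (1 - e)))
    (fun a => by
      simp only [LinearMap.comp_apply, LinearMap.mulLeft_apply, LinearMap.mulRight_apply]
      have h2 : (1 - e) * (1 - e) = 1 - e := he.one_sub
      calc e * (e * (a * (1 - e)) * (1 - e)) = (e * e) * a * ((1 - e) * (1 - e)) := by
            simp only [mul_assoc]
        _ = _ := by rw [hee, h2, mul_assoc])
    (fun a => by
      have h := hbar (a * (1 - e))
      have h3 : a * (1 - e) * e = 0 := by rw [mul_assoc, sub_mul, one_mul, hee, sub_self, mul_zero]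
      rw [h3, sub_zero] at h
      exact h) a
  have h2 := aux_proj_zero R A
    ((LinearMap.mulLeft R (1 - e)).comp (LinearMap.mulRight R e))
    (fun a => by
      simp only [LinearMap.comp_apply, LinearMap.mulLeft_apply, LinearMap.mulRight_apply]
      have h2 : (1 - e) * (1 - e) = 1 - e := he.one_sub
      calc (1 - e) * ((1 - e) * (a * e) * e) = ((1 - e) * (1 - e)) * a * (e * e) := by
            simp only [mul_assoc]
        _ = _ := by rw [hee, h2, mul_assoc])
    (fun a => by
      have h := Submodule.neg_mem _ (hbar ((1 - e) * a))
      have h3 : e * ((1 - e) * a) = 0 := by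
        rw [← mul_assoc, mul_sub, mul_one, hee, sub_self, zero_mul]
      rw [h3, zero_sub, neg_neg, mul_assoc] at h
      exact h) a
  simp only [LinearMap.comp_apply, LinearMap.mulLeft_apply, LinearMap.mulRight_apply] at h1 h2
  rw [mul_sub, mul_sub, mul_one, sub_eq_zero] at h1
  rw [sub_mul, one_mul, sub_eq_zero] at h2
  exact h1.trans h2.symm
end

section
/- Let O be a Noetherian integrally closed domain with field of fractions F, let A be an O-algebra that is free and finitely generated as an O-module, let K be a finite Galois extension of F, and let O_K be the integral closure of O in K. The group Gal(K/F) acts on O_K ⊗_O A through the first factor. Then the map sending a Gal(K/F)-orbit of primitive idempotents of Z(O_K ⊗_O A) to the sum of its elements is a bijection from the set of Gal(K/F)-orbits of primitive idempotents of Z(O_K ⊗_O A) onto the set of primitive idempotents of Z(A) (where A is identified with its image O ⊗_O A ⊆ O_K ⊗_O A). -/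
open scoped TensorProduct

/-- A block of a ring: a primitive idempotent of the center, i.e. a nonzero central idempotent
which cannot be written as a sum of two nonzero orthogonal central idempotents. -/
def IsBlockIdempotent {A : Type*} [Ring A] (e : A) : Prop :=
  e ∈ Subring.center A ∧ IsIdempotentElem e ∧ e ≠ 0 ∧
    ∀ f g : A, f ∈ Subring.center A → g ∈ Subring.center A →
      IsIdempotentElem f → IsIdempotentElem g → f * g = 0 → e = f + g → f = 0 ∨ g = 0

variable (O : Type) [CommRing O] [IsDomain O] [IsNoetherianRing O] [IsIntegrallyClosed O]
  (F : Type) [Field F] [Algebra O F] [IsFractionRing O F]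
  (K : Type) [Field K] [Algebra F K] [FiniteDimensional F K] [IsGalois F K]
  [Algebra O K] [IsScalarTower O F K]
  (A : Type) [Ring A] [Algebra O A] [Module.Finite O A] [Module.Free O A]

/-- The semilinear action of `Gal(K/F)` on `O_K ⊗_O A` through the first factor, where
`O_K` is the integral closure of `O` in `K`: `σ(λ ⊗ a) = σ(λ) ⊗ a`. -/
noncomputable def galoisActOnTensor (σ : K ≃ₐ[F] K) :
    ((integralClosure O K) ⊗[O] A) ≃ₐ[O] ((integralClosure O K) ⊗[O] A) :=
  Algebra.TensorProduct.congr (galRestrict O F K (integralClosure O K) σ) AlgEquiv.refl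

/-- The `Gal(K/F)`-orbit of an element of `O_K ⊗_O A`. -/
noncomputable def galoisOrbit (e : (integralClosure O K) ⊗[O] A) :
    Set ((integralClosure O K) ⊗[O] A) :=
  Set.range fun σ : K ≃ₐ[F] K => galoisActOnTensor O F K A σ e

set_option linter.unusedSectionVars false

section Abstract

theorem blk_eq_or_orth {B : Type*} [Ring B] {e f : B} (he : IsBlockIdempotent e)
    (hf : f ∈ Subring.center B) (hf2 : IsIdempotentElem f) : e * f = 0 ∨ e * f = e := by
  obtain ⟨hc, hi, hn, hp⟩ := he
  have hcf : f * e = e * f := (Subring.mem_center_iff.mp hf e).symm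
  have key := hp (e * f) (e * (1 - f)) (mul_mem hc hf)
    (mul_mem hc (sub_mem (one_mem _) hf)) (hi.mul_of_commute hcf.symm hf2)
    (hi.mul_of_commute (by
      show e * (1 - f) = (1 - f) * e
      rw [mul_sub, sub_mul, hcf]; simp) hf2.one_sub)
    (by
      have : f * (1 - f) = 0 := by rw [mul_sub, hf2.eq]; simp
      calc e * f * (e * (1 - f)) = e * (f * e) * (1 - f) := by noncomm_ring
        _ = e * e * (f * (1 - f)) := by rw [hcf]; noncomm_ring
        _ = 0 := by rw [this]; simp)
    (by noncomm_ring)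
  rcases key with h | h
  · exact Or.inl h
  · right
    rw [mul_sub, mul_one, sub_eq_zero] at h
    exact h.symm

theorem blk_eq {B : Type*} [Ring B] {e f : B} (he : IsBlockIdempotent e)
    (hf : IsBlockIdempotent f) (h : e * f ≠ 0) : e = f := by
  have h1 := (blk_eq_or_orth he hf.1 hf.2.1).resolve_left h
  have hc : f * e = e * f := (Subring.mem_center_iff.mp hf.1 e).symm
  have h2 := (blk_eq_or_orth hf he.1 he.2.1).resolve_left (by rwa [hc])
  rw [← h1, ← hc, h2]

theorem center_map {B : Type*} [Ring B] (φ : B ≃+* B) {e : B} (h : e ∈ Subring.center B) :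
    φ e ∈ Subring.center B := by
  rw [Subring.mem_center_iff] at h ⊢
  intro g
  have := congrArg φ (h (φ.symm g))
  simpa using this

theorem blk_map {B : Type*} [Ring B] (φ : B ≃+* B) {e : B} (h : IsBlockIdempotent e) :
    IsBlockIdempotent (φ e) := by
  obtain ⟨hc, hi, hn, hp⟩ := h
  refine ⟨center_map φ hc, hi.map φ, by simpa using hn, ?_⟩
  intro f g hf hg hf2 hg2 hfg hs
  have := hp (φ.symm f) (φ.symm g) (center_map _ hf) (center_map _ hg) (hf2.map _) (hg2.map _)
    (by rw [← map_mul, hfg, map_zero]) (by rw [← map_add, ← hs]; simp)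
  simpa using this

theorem exists_blk {R B : Type*} [CommRing R] [Ring B] [Algebra R B] [IsNoetherian R B]
    {u : B} (hu : u ∈ Subring.center B) (hu2 : IsIdempotentElem u) (hu0 : u ≠ 0) :
    ∃ e : B, IsBlockIdempotent e ∧ e * u = e := by
  let P : Set B := {e | e ∈ Subring.center B ∧ IsIdempotentElem e ∧ e ≠ 0 ∧ e * u = e}
  let N : B → Submodule R B := fun e => LinearMap.ker (LinearMap.mulLeft R e)
  obtain ⟨M, ⟨e, he, rfl⟩, hM⟩ := set_has_maximal_iff_noetherian.mpr
    (inferInstance : IsNoetherian R B) (N '' P) ⟨_, u, ⟨hu, hu2, hu0, hu2⟩, rfl⟩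
  obtain ⟨hc, hi, hn, heu⟩ := he
  refine ⟨e, ⟨hc, hi, hn, ?_⟩, heu⟩
  intro f g hf hg hf2 hg2 hfg hs
  by_contra! hcon
  have hfe : f * e = f := by rw [hs, mul_add, hfg, hf2.eq, add_zero]
  have hgf : g * f = 0 := by rw [Subring.mem_center_iff.mp hf g, hfg]
  have heg : e * g = g := by rw [hs, add_mul, hfg, hg2.eq, zero_add]
  refine hM (N f) ⟨f, ⟨hf, hf2, hcon.1, by rw [← hfe, mul_assoc, heu]⟩, rfl⟩ ?_
  refine lt_of_le_of_ne ?_ ?_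
  · intro x hx
    have hx : e * x = 0 := hx
    show f * x = 0
    rw [← hfe, mul_assoc, hx, mul_zero]
  · intro h
    have : g ∈ N e := by
      rw [h]
      exact hfg
    have : e * g = 0 := this
    exact hcon.2 (by rw [← heg, this])

variable {G A B : Type*} [Group G] [Finite G] [Ring A] [Ring B]
  (φ : G → (B ≃+* B)) (h1 : ∀ x, φ 1 x = x) (hm : ∀ σ τ x, φ (σ * τ) x = φ σ (φ τ x))
  (ι : A →+* B) (hι : Function.Injective ι) (hc : ∀ a ∈ Subring.center A, ι a ∈ Subring.center B)
  (hσ : ∀ σ a, φ σ (ι a) = ι a) (hfix : ∀ b, (∀ σ, φ σ b = b) → ∃ a, ι a = b)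

theorem mul_fs {S : Set B} (hS : S.Finite) (y : B) :
    y * (∑ᶠ x ∈ S, x) = ∑ᶠ x ∈ S, y * x := mul_finsum_mem' (fun x => x) y hS

theorem fs_mul {S : Set B} (hS : S.Finite) (y : B) :
    (∑ᶠ x ∈ S, x) * y = ∑ᶠ x ∈ S, x * y := finsum_mem_mul' (fun x => x) y hS

theorem orb_sum_fix (hm : ∀ σ τ x, φ (σ * τ) x = φ σ (φ τ x)) (e : B) (σ : G) :
    φ σ (∑ᶠ x ∈ Set.range (fun τ => φ τ e), x) = ∑ᶠ x ∈ Set.range (fun τ => φ τ e), x := by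
  have hfin : (Set.range (fun τ => φ τ e)).Finite := Set.finite_range _
  have h := (φ σ : B ≃+* B).toAddMonoidHom.map_finsum_mem (fun x => x) hfin
  refine h.trans ?_
  refine finsum_mem_eq_of_bijOn (φ σ) ⟨?_, (φ σ).injective.injOn, ?_⟩ (fun x _ => rfl)
  · rintro _ ⟨τ, rfl⟩
    exact ⟨σ * τ, hm _ _ _⟩
  · rintro _ ⟨τ, rfl⟩
    exact ⟨φ (σ⁻¹ * τ) e, ⟨_, rfl⟩, by rw [← hm, mul_inv_cancel_left]⟩

theorem mul_orb_sum {e y : B} (he : IsBlockIdempotent e) (hy : y ∈ Set.range (fun τ => φ τ e)) :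
    y * (∑ᶠ x ∈ Set.range (fun τ => φ τ e), x) = y := by
  have hfin : (Set.range (fun τ => φ τ e)).Finite := Set.finite_range _
  have hb : ∀ x ∈ Set.range (fun τ => φ τ e), IsBlockIdempotent x := by
    rintro _ ⟨τ, rfl⟩
    exact blk_map _ he
  rw [mul_fs hfin, finsum_mem_eq_finite_toFinset_sum _ hfin,
    Finset.sum_eq_single y, (hb y hy).2.1.eq]
  · intro x hx hxy
    by_contra hne
    exact hxy (blk_eq (hb y hy) (hb x (by simpa using hx)) hne).symm
  · intro h
    exact absurd (by simpa using hy) h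

theorem orb_sum_mul_zero {e f : B} (h : ∀ y ∈ Set.range (fun τ => φ τ e), y * f = 0) :
    (∑ᶠ x ∈ Set.range (fun τ => φ τ e), x) * f = 0 := by
  have hfin : (Set.range (fun τ => φ τ e)).Finite := Set.finite_range _
  rw [fs_mul hfin]
  exact finsum_mem_eq_zero_of_forall_eq_zero h

theorem orb_sum_center {e : B} (he : IsBlockIdempotent e) :
    (∑ᶠ x ∈ Set.range (fun τ => φ τ e), x) ∈ Subring.center B := by
  have hfin : (Set.range (fun τ => φ τ e)).Finite := Set.finite_range _
  rw [finsum_mem_eq_finite_toFinset_sum _ hfin]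
  refine sum_mem fun x hx => ?_
  obtain ⟨τ, rfl⟩ : x ∈ Set.range (fun τ => φ τ e) := by simpa using hx
  exact center_map _ he.1

theorem orb_sum_idem {e : B} (he : IsBlockIdempotent e) :
    IsIdempotentElem (∑ᶠ x ∈ Set.range (fun τ => φ τ e), x) := by
  have hfin : (Set.range (fun τ => φ τ e)).Finite := Set.finite_range _
  show _ * _ = _
  conv_lhs => rw [fs_mul hfin]
  exact finsum_mem_congr rfl fun y hy => mul_orb_sum φ he hy

include h1 hm hι hc hσ hfix in
theorem blkabs_one {e : B} (he : IsBlockIdempotent e) :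
    ∃ E : A, IsBlockIdempotent E ∧ ι E = ∑ᶠ x ∈ Set.range (fun τ => φ τ e), x := by
  obtain ⟨E, hE⟩ := hfix _ (orb_sum_fix φ hm e)
  have hee : e * ι E = e := by
    rw [hE]; exact mul_orb_sum φ he ⟨1, h1 e⟩
  refine ⟨E, ⟨?_, ?_, ?_, ?_⟩, hE⟩
  · rw [Subring.mem_center_iff]
    intro g
    apply hι
    rw [map_mul, map_mul]
    exact Subring.mem_center_iff.mp (hE ▸ orb_sum_center φ he) _
  · apply hι
    rw [map_mul, hE]
    exact orb_sum_idem φ he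
  · rintro rfl
    rw [map_zero, mul_zero] at hee
    exact he.2.2.1 hee.symm
  · have aux : ∀ f : A, E * f = f → e * ι f = 0 → f = 0 := by
      intro f hf h0
      apply hι
      rw [← hf, map_mul, hE, map_zero]
      apply orb_sum_mul_zero
      rintro _ ⟨τ, rfl⟩
      have := congrArg (φ τ) h0
      rwa [map_mul, hσ, map_zero] at this
    intro f g hf hg hf2 hg2 hfg hs
    have hgf : g * f = 0 := by rw [Subring.mem_center_iff.mp hf g, hfg]
    have hif := hf2.map ι
    have hig := hg2.map ι
    rcases blk_eq_or_orth he (hc f hf) hif with h | h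
    · exact Or.inl (aux f (by rw [hs, add_mul, hf2.eq, hgf, add_zero]) h)
    · refine Or.inr (aux g (by rw [hs, add_mul, hg2.eq, hfg, zero_add]) ?_)
      rw [← h, mul_assoc, ← map_mul, hfg, map_zero, mul_zero]

include h1 hm in
theorem blkabs_two {e e' : B} (he : IsBlockIdempotent e) (he' : IsBlockIdempotent e')
    (h : (∑ᶠ x ∈ Set.range (fun τ => φ τ e), x) = ∑ᶠ x ∈ Set.range (fun τ => φ τ e'), x) :
    Set.range (fun τ => φ τ e) = Set.range (fun τ => φ τ e') := by
  have hee := mul_orb_sum φ he ⟨1, h1 e⟩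
  have hfin : (Set.range (fun τ => φ τ e')).Finite := Set.finite_range _
  rw [h, mul_fs hfin] at hee
  obtain ⟨σ, hs⟩ : ∃ σ, e = φ σ e' := by
    by_contra! hcon
    apply he.2.2.1
    rw [← hee]
    apply finsum_mem_eq_zero_of_forall_eq_zero
    rintro _ ⟨τ, rfl⟩
    by_contra hne
    exact hcon τ (blk_eq he (blk_map _ he') hne)
  subst hs
  ext x
  constructor
  · rintro ⟨τ, rfl⟩
    exact ⟨τ * σ, hm _ _ _⟩
  · rintro ⟨τ, rfl⟩
    exact ⟨τ * σ⁻¹, by simp only [← hm, inv_mul_cancel_right]⟩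

include h1 hm hι hc hσ hfix in
theorem blkabs_three {R : Type*} [CommRing R] [Algebra R B] [IsNoetherian R B]
    {E : A} (hE : IsBlockIdempotent E) :
    ∃ e : B, IsBlockIdempotent e ∧ ι E = ∑ᶠ x ∈ Set.range (fun τ => φ τ e), x := by
  obtain ⟨e, he, heE⟩ := exists_blk (R := R) (hc E hE.1) (hE.2.1.map ι)
    (fun h => hE.2.2.1 (hι (by rw [h, map_zero])))
  obtain ⟨E', hE', h⟩ := blkabs_one φ h1 hm ι hι hc hσ hfix he
  refine ⟨e, he, ?_⟩
  rw [← h]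
  congr 1
  refine (blk_eq hE' hE fun h0 => he.2.2.1 ?_).symm
  have hee := mul_orb_sum φ he ⟨1, h1 e⟩
  rw [← h] at hee
  rw [← heE]
  nth_rw 1 [← hee]
  rw [mul_assoc, ← map_mul, h0, map_zero, mul_zero]

end Abstract

theorem act_one (x : (integralClosure O K) ⊗[O] A) : galoisActOnTensor O F K A 1 x = x := by
  induction x with
  | zero => simp
  | add x y hx hy => rw [map_add, hx, hy]
  | tmul x y => simp [galoisActOnTensor]

theorem act_mul (σ τ : K ≃ₐ[F] K) (x : (integralClosure O K) ⊗[O] A) :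
    galoisActOnTensor O F K A (σ * τ) x =
      galoisActOnTensor O F K A σ (galoisActOnTensor O F K A τ x) := by
  induction x with
  | zero => simp
  | add x y hx hy => simp only [map_add, hx, hy]
  | tmul x y => simp [galoisActOnTensor]

theorem act_incl (σ : K ≃ₐ[F] K) (a : A) :
    galoisActOnTensor O F K A σ (Algebra.TensorProduct.includeRight a) =
      Algebra.TensorProduct.includeRight a := by
  simp [galoisActOnTensor]

include F in
theorem incl_inj : Function.Injective
    (Algebra.TensorProduct.includeRight : A →ₐ[O] (integralClosure O K) ⊗[O] A) := by
  have : FaithfulSMul O F := inferInstance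
  have : FaithfulSMul O K := FaithfulSMul.trans O F K
  refine Algebra.TensorProduct.includeRight_injective ?_
  exact FaithfulSMul.algebraMap_injective O (integralClosure O K)

theorem incl_center (a : A) (ha : a ∈ Subring.center A) :
    (Algebra.TensorProduct.includeRight a : (integralClosure O K) ⊗[O] A) ∈
      Subring.center ((integralClosure O K) ⊗[O] A) := by
  rw [Subring.mem_center_iff] at ha ⊢
  intro g
  induction g with
  | zero => simp
  | add x y hx hy => rw [add_mul, mul_add, hx, hy]
  | tmul x y => simp [ha y]

theorem base_fix (x : integralClosure O K)
    (h : ∀ σ : K ≃ₐ[F] K, galRestrict O F K (integralClosure O K) σ x = x) :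
    ∃ r : O, algebraMap O (integralClosure O K) r = x := by
  have hx : (x : K) ∈ Set.range (algebraMap F K) := by
    rw [IsGalois.mem_range_algebraMap_iff_fixed]
    intro σ
    have := congrArg (algebraMap (integralClosure O K) K) (h σ)
    rwa [algebraMap_galRestrict_apply] at this
  obtain ⟨y, hy⟩ := hx
  have hint : IsIntegral O y := by
    have h2 : IsIntegral O (algebraMap F K y) := by rw [hy]; exact x.2
    exact (isIntegral_algebraMap_iff (algebraMap F K).injective).mp h2
  obtain ⟨r, rfl⟩ := IsIntegrallyClosed.isIntegral_iff.mp hint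
  refine ⟨r, Subtype.ext ?_⟩
  rw [← hy, ← IsScalarTower.algebraMap_apply O F K]
  rfl

theorem act_fix (b : (integralClosure O K) ⊗[O] A)
    (h : ∀ σ : K ≃ₐ[F] K, galoisActOnTensor O F K A σ b = b) :
    ∃ a : A, (Algebra.TensorProduct.includeRight a : (integralClosure O K) ⊗[O] A) = b := by
  let β := Module.Free.chooseBasis O A
  let B := Algebra.TensorProduct.basis (integralClosure O K) β
  have hact : ∀ (σ : K ≃ₐ[F] K) (x : (integralClosure O K) ⊗[O] A) i,
      B.repr (galoisActOnTensor O F K A σ x) i =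
        galRestrict O F K (integralClosure O K) σ (B.repr x i) := by
    intro σ x i
    induction x with
    | zero => simp
    | add x y hx hy => simp only [map_add, Finsupp.add_apply, hx, hy]
    | tmul x y => simp [galoisActOnTensor, B, Algebra.TensorProduct.basis_repr_tmul]
  have hr : ∀ i, ∃ r : O, algebraMap O (integralClosure O K) r = B.repr b i := by
    intro i
    refine base_fix O F K _ fun σ => ?_
    rw [← hact, h]
  choose r hr using hr
  refine ⟨∑ i, r i • β i, ?_⟩
  rw [← B.sum_repr b, map_sum]
  refine Finset.sum_congr rfl fun i _ => ?_
  rw [← hr]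
  simp [B, Algebra.TensorProduct.basis_apply]

include F in
theorem tens_noeth : IsNoetherian O ((integralClosure O K) ⊗[O] A) := by
  have : IsNoetherian O (integralClosure O K) :=
    IsIntegralClosure.isNoetherian O F K (integralClosure O K)
  exact isNoetherian_of_isNoetherianRing_of_finite O _

/-- Let `O` be a Noetherian integrally closed domain with field of fractions
`F`, `A` an `O`-algebra free and finitely generated as an `O`-module, `K/F` a finite Galois
extension and `O_K` the integral closure of `O` in `K`. The map sending a `Gal(K/F)`-orbit of
primitive idempotents of `Z(O_K ⊗_O A)` to the sum of its elements is a bijection from the set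
of such orbits onto the set of primitive idempotents of `Z(A)` (where `A` is identified with
its image `O ⊗_O A ⊆ O_K ⊗_O A`). -/
theorem galois_orbit_sum_bijection_on_blocks :
    (∀ e : (integralClosure O K) ⊗[O] A, IsBlockIdempotent e →
      ∃ E : A, IsBlockIdempotent E ∧
        (Algebra.TensorProduct.includeRight E : (integralClosure O K) ⊗[O] A) =
          ∑ᶠ x ∈ galoisOrbit O F K A e, x) ∧
    (∀ e e' : (integralClosure O K) ⊗[O] A, IsBlockIdempotent e → IsBlockIdempotent e' →
      (∑ᶠ x ∈ galoisOrbit O F K A e, x) = (∑ᶠ x ∈ galoisOrbit O F K A e', x) →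
      galoisOrbit O F K A e = galoisOrbit O F K A e') ∧
    (∀ E : A, IsBlockIdempotent E →
      ∃ e : (integralClosure O K) ⊗[O] A, IsBlockIdempotent e ∧
        (Algebra.TensorProduct.includeRight E : (integralClosure O K) ⊗[O] A) =
          ∑ᶠ x ∈ galoisOrbit O F K A e, x) := by
  have := tens_noeth O F K A
  let φ : (K ≃ₐ[F] K) → (((integralClosure O K) ⊗[O] A) ≃+* ((integralClosure O K) ⊗[O] A)) :=
    fun σ => (galoisActOnTensor O F K A σ).toRingEquiv
  let ι : A →+* ((integralClosure O K) ⊗[O] A) :=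
    (Algebra.TensorProduct.includeRight : A →ₐ[O] (integralClosure O K) ⊗[O] A).toRingHom
  have h1 : ∀ x, φ 1 x = x := act_one O F K A
  have hm : ∀ σ τ x, φ (σ * τ) x = φ σ (φ τ x) := act_mul O F K A
  have hι : Function.Injective ι := incl_inj O F K A
  have hc : ∀ a ∈ Subring.center A, ι a ∈ Subring.center _ := incl_center O K A
  have hσ : ∀ σ a, φ σ (ι a) = ι a := act_incl O F K A
  have hfix : ∀ b, (∀ σ, φ σ b = b) → ∃ a, ι a = b := act_fix O F K A
  exact ⟨fun e he => blkabs_one φ h1 hm ι hι hc hσ hfix he,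
    fun e e' he he' h => blkabs_two φ h1 hm he he' h,
    fun E hE => blkabs_three φ h1 hm ι hι hc hσ hfix (R := O) hE⟩
end

section
/- Let O be a Noetherian integrally closed domain with field of fractions F, let A be an O-algebra that is free and finitely generated as an O-module, let K be a finite Galois extension of F, and let O_K be the integral closure of O in K. An idempotent e of Z(O_K ⊗_O A) lies in Z(A) (identifying A with O ⊗_O A ⊆ O_K ⊗_O A) if and only if σ(e) = e for all σ ∈ Gal(K/F). -/
open scoped TensorProduct
set_option synthInstance.maxHeartbeats 1000000

variable (O : Type) [CommRing O] [IsDomain O] [IsNoetherianRing O] [IsIntegrallyClosed O]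
  (F : Type) [Field F] [Algebra O F] [IsFractionRing O F]
  (K : Type) [Field K] [Algebra F K] [FiniteDimensional F K] [IsGalois F K]
  [Algebra O K] [IsScalarTower O F K]
  (A : Type) [Ring A] [Algebra O A] [Module.Finite O A] [Module.Free O A]

/-- Let `O` be a Noetherian integrally closed domain with field of fractions
`F`, `A` an `O`-algebra free and finitely generated as an `O`-module, `K/F` a finite Galois
extension and `O_K` the integral closure of `O` in `K`. An idempotent `e` of `Z(O_K ⊗_O A)`
lies in `Z(A)` (identifying `A` with `O ⊗_O A ⊆ O_K ⊗_O A`) if and only if `σ(e) = e` for all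
`σ ∈ Gal(K/F)`. -/
theorem central_idempotent_mem_base_iff_galois_fixed
    (e : (integralClosure O K) ⊗[O] A)
    (hcent : e ∈ Subring.center ((integralClosure O K) ⊗[O] A))
    (hidem : IsIdempotentElem e) :
    (∃ a : A, (Algebra.TensorProduct.includeRight a :
        (integralClosure O K) ⊗[O] A) = e) ↔
      ∀ σ : K ≃ₐ[F] K, galoisActOnTensor O F K A σ e = e := by
  classical
  constructor
  · rintro ⟨a, rfl⟩ σ
    simp [galoisActOnTensor]
  · intro h
    let b := Module.Free.chooseBasis O A
    let B := b.baseChange (integralClosure O K)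
    have key : ∀ (σ : K ≃ₐ[F] K) (x : (integralClosure O K) ⊗[O] A) i,
        B.repr (galoisActOnTensor O F K A σ x) i =
          galRestrict O F K (integralClosure O K) σ (B.repr x i) := by
      intro σ x i
      induction x using TensorProduct.induction_on with
      | zero => simp
      | tmul s a =>
        simp [galoisActOnTensor, B, Module.Basis.baseChange_repr_tmul]
      | add x y hx hy => simp only [map_add, Finsupp.add_apply, hx, hy]
    have hfix : ∀ i, ∃ c : O, algebraMap O (integralClosure O K) c = B.repr e i := by
      intro i
      have : IsFractionRing (integralClosure O K) K :=
        integralClosure.isFractionRing_of_finite_extension F K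
      letI : MulSemiringAction Gal(K/F) (integralClosure O K) :=
        IsIntegralClosure.MulSemiringAction O F K (integralClosure O K)
      have := Algebra.isInvariant_of_isGalois O F K (integralClosure O K)
      refine this.1 (B.repr e i) fun σ => ?_
      have h1 := key σ e i
      rw [h σ] at h1
      exact h1.symm
    choose c hc using hfix
    refine ⟨∑ i, c i • b i, ?_⟩
    rw [← B.sum_repr e]
    simp only [map_sum, ← hc, map_smul, algebraMap_smul]
    refine Finset.sum_congr rfl fun i _ => ?_
    simp [B]
end

section
/- Let O be a Noetherian integrally closed domain with field of fractions F, let A be an O-algebra that is free and finitely generated as an O-module, let K be a finite Galois extension of F such that K ⊗_O A is split semisimple, and let O_K be the integral closure of O in K. Denote by {e_χ : χ ∈ Irr(KA)} the primitive central idempotents of KA := K ⊗_O A; Gal(K/F) permutes them. Then for χ, ψ ∈ Irr(KA), the idempotents e_χ and e_ψ are dominated by the same primitive idempotent of Z(A) if and only if there exists σ ∈ Gal(K/F) such that σ(e_χ) and e_ψ are dominated by the same primitive idempotent of Z(O_K ⊗_O A). -/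
open scoped TensorProduct
set_option synthInstance.maxHeartbeats 1000000
set_option maxHeartbeats 1000000

variable (O : Type) [CommRing O] [IsDomain O] [IsNoetherianRing O] [IsIntegrallyClosed O]
  (F : Type) [Field F] [Algebra O F] [IsFractionRing O F]
  (K : Type) [Field K] [Algebra F K] [FiniteDimensional F K] [IsGalois F K]
  [Algebra O K] [IsScalarTower O F K]
  (A : Type) [Ring A] [Algebra O A] [Module.Finite O A] [Module.Free O A]

/-- `K ⊗_O A` is a split semisimple `K`-algebra: it is semisimple and every endomorphism of
every simple module is given by multiplication by a scalar of `K`. -/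
def IsSplitSemisimpleTensor : Prop :=
  IsSemisimpleRing (K ⊗[O] A) ∧
    ∀ (M : Type) (_ : AddCommGroup M) (_ : Module (K ⊗[O] A) M),
      IsSimpleModule (K ⊗[O] A) M →
        ∀ f : M →ₗ[K ⊗[O] A] M, ∃ c : K, ∀ x : M, f x = algebraMap K (K ⊗[O] A) c • x

/-- The semilinear action of `Gal(K/F)` on `K ⊗_O A` through the first factor:
`σ(λ ⊗ a) = σ(λ) ⊗ a`. -/
noncomputable def galoisActOnKTensor (σ : K ≃ₐ[F] K) : (K ⊗[O] A) ≃ₐ[O] (K ⊗[O] A) :=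
  Algebra.TensorProduct.congr (AlgEquiv.restrictScalars O σ) AlgEquiv.refl

/-- The natural map `O_K ⊗_O A → K ⊗_O A` induced by the inclusion `O_K ⊆ K` of the integral
closure of `O` in `K`. -/
noncomputable def integralClosureTensorToKTensor :
    ((integralClosure O K) ⊗[O] A) →ₐ[O] (K ⊗[O] A) :=
  Algebra.TensorProduct.map (IsScalarTower.toAlgHom O (integralClosure O K) K) (AlgHom.id O A)

theorem IsBlockIdempotent.mul_eq_or {S : Type*} [Ring S] {e z : S} (he : IsBlockIdempotent e)
    (hz : z ∈ Subring.center S) (hzi : IsIdempotentElem z) : z * e = 0 ∨ z * e = e := by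
  obtain ⟨hc, hi, -, hp⟩ := he
  have hcomm : e * z = z * e := Subring.mem_center_iff.1 hz e
  have hi' : e * e = e := hi
  have hzi' : z * z = z := hzi
  have h1 : IsIdempotentElem (z * e) := by
    change z * e * (z * e) = z * e
    rw [mul_assoc, ← mul_assoc e, hcomm, mul_assoc, hi', ← mul_assoc, hzi']
  have h2 : IsIdempotentElem ((1 - z) * e) := by
    have hcm : Commute (1 - z) e := (Commute.one_left e).sub_left hcomm.symm
    exact IsIdempotentElem.mul_of_commute hcm hzi.one_sub hi
  have h3 : z * e * ((1 - z) * e) = 0 := by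
    rw [mul_assoc, ← mul_assoc e, mul_sub, mul_one, hcomm, sub_mul, hi', mul_assoc, hi',
      mul_sub, ← mul_assoc, hzi', sub_self]
  rcases hp (z * e) ((1 - z) * e) (mul_mem hz hc) (mul_mem (sub_mem (one_mem _) hz) hc) h1 h2 h3
    (by rw [← add_mul]; simp) with h | h
  · exact Or.inl h
  · right
    rw [sub_mul, one_mul, sub_eq_zero] at h
    exact h.symm

theorem exists_block_dominating {R S : Type*} [Ring R] [Ring S] [IsNoetherianRing R]
    (φ : R →+* S) (hφ : ∀ z ∈ Subring.center R, φ z ∈ Subring.center S)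
    {e : S} (he : IsBlockIdempotent e) : ∃ f : R, IsBlockIdempotent f ∧ φ f * e = e := by
  let T : Set (Ideal R) := {I | ∃ f : R, f ∈ Subring.center R ∧ IsIdempotentElem f ∧
    φ f * e = e ∧ I = Ideal.span {1 - f}}
  have hT : T.Nonempty := ⟨_, 1, one_mem _, IsIdempotentElem.one, by simp, rfl⟩
  obtain ⟨I, ⟨f, hfc, hfi, hfe, rfl⟩, hmax⟩ := set_has_maximal_iff_noetherian.2
    (inferInstanceAs (IsNoetherian R R)) T hT
  have key : ∀ a b : R, a ∈ Subring.center R → IsIdempotentElem a → a * b = 0 → b * a = 0 →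
      f = a + b → φ a * e = e → b = 0 := by
    intro a b ha hai hab hba hf hae
    have haa : a * a = a := hai
    have hfa : f * a = a := by rw [hf, add_mul, haa, hba, add_zero]
    have hle : Ideal.span {1 - f} ≤ Ideal.span {1 - a} := by
      rw [Ideal.span_le, Set.singleton_subset_iff]
      refine Ideal.mem_span_singleton'.2 ⟨1 - f, ?_⟩
      rw [mul_sub, mul_one, sub_mul, one_mul, hfa, sub_self, sub_zero]
    have hnlt := hmax (Ideal.span {1 - a}) ⟨a, ha, hai, hae, rfl⟩
    have hmem : 1 - a ∈ Ideal.span {1 - f} := by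
      by_contra hn
      exact hnlt (lt_of_le_of_ne hle fun h => hn (h ▸ Ideal.mem_span_singleton_self _))
    obtain ⟨r, hr⟩ := Ideal.mem_span_singleton'.1 hmem
    have hff : f * f = f := hfi
    have h0 : (1 - a) * f = 0 := by
      rw [← hr, mul_assoc, sub_mul, one_mul, hff, sub_self, mul_zero]
    rw [sub_mul, one_mul, sub_eq_zero] at h0
    rw [hf, mul_add, haa, hab, add_zero] at h0
    simpa using h0
  refine ⟨f, ⟨hfc, hfi, ?_, ?_⟩, hfe⟩
  · rintro rfl
    apply he.2.2.1
    rw [← hfe]; simp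
  · intro a b ha hb hai hbi hab hf
    have hba : b * a = 0 := by rw [← hab]; exact Subring.mem_center_iff.1 ha b
    rcases he.mul_eq_or (hφ a ha) (hai.map φ) with h | h
    · left
      refine key b a hb hbi hba hab (by rw [hf, add_comm]) ?_
      rw [hf, map_add, add_mul, h, zero_add] at hfe
      exact hfe
    · right
      exact key a b ha hai hab hba hf h

theorem map_mem_center_of_equiv {R S : Type*} [Ring R] [Ring S] (τ : R ≃+* S) {z : R}
    (hz : z ∈ Subring.center R) : τ z ∈ Subring.center S :=
  (Subring.centerCongr τ ⟨z, hz⟩).2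

theorem IsBlockIdempotent.map_equiv {R S : Type*} [Ring R] [Ring S] (τ : R ≃+* S) {e : R}
    (he : IsBlockIdempotent e) : IsBlockIdempotent (τ e) := by
  obtain ⟨hc, hi, h0, hp⟩ := he
  refine ⟨map_mem_center_of_equiv τ hc, hi.map τ, by simpa using h0, ?_⟩
  intro f g hf hg hfi hgi hfg hsum
  have := hp (τ.symm f) (τ.symm g) (map_mem_center_of_equiv τ.symm hf)
    (map_mem_center_of_equiv τ.symm hg) (hfi.map τ.symm) (hgi.map τ.symm)
    (by rw [← map_mul, hfg, map_zero]) (by rw [← map_add, ← hsum]; simp)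
  simpa using this

theorem blocks_abstract {A B C G : Type*} [Ring A] [Ring B] [Ring C] [Group G] [Finite G]
    [IsNoetherianRing A] [IsNoetherianRing B] (ι : A →+* B) (φ : B →+* C)
    (ρ : G → B ≃+* B) (ρ' : G → C ≃+* C)
    (hρ1 : ∀ x, ρ 1 x = x) (hρ : ∀ s t x, ρ (s * t) x = ρ s (ρ t x))
    (hφρ : ∀ s x, φ (ρ s x) = ρ' s (φ x)) (hρι : ∀ s x, ρ s (ι x) = ι x)
    (hinv : ∀ x, (∀ s, ρ s x = x) → ∃ a, ι a = x) (hinj : Function.Injective ι)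
    (hιc : ∀ z ∈ Subring.center A, ι z ∈ Subring.center B)
    (hφc : ∀ z ∈ Subring.center B, φ z ∈ Subring.center C)
    {e e' : C} (he : IsBlockIdempotent e) (he' : IsBlockIdempotent e') :
    (∃ f : A, IsBlockIdempotent f ∧ φ (ι f) * e = e ∧ φ (ι f) * e' = e') ↔
    (∃ (s : G) (g : B), IsBlockIdempotent g ∧ φ g * ρ' s e = ρ' s e ∧ φ g * e' = e') := by
  classical
  have := Fintype.ofFinite G
  constructor
  · rintro ⟨f, hf, hfe, hfe'⟩
    obtain ⟨g, hg, hge⟩ := exists_block_dominating φ hφc he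
    by_contra! hcon
    have hσ : ∀ s, φ (ρ s g) * e' = 0 := by
      intro s
      have hb := hg.map_equiv (ρ s)
      refine (he'.mul_eq_or (hφc _ hb.1) (hb.2.1.map φ)).resolve_right ?_
      refine hcon s _ hb ?_
      rw [hφρ, ← map_mul, hge]
    let z : G → Subring.center B := fun s => 1 - Subring.centerCongr (ρ s) ⟨g, hg.1⟩
    have hz : ∀ s, (z s : B) = 1 - ρ s g := fun s => rfl
    let p : Subring.center B := ∏ s, z s
    have hzi : ∀ s, z s * z s = z s := by
      intro s
      apply Subtype.ext
      exact (hg.map_equiv (ρ s)).2.1.one_sub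
    have hpi : p * p = p := by
      change (∏ s, z s) * (∏ s, z s) = ∏ s, z s
      rw [← Finset.prod_mul_distrib]
      exact Finset.prod_congr rfl fun s _ => hzi s
    have hpfix : ∀ t, ρ t (p : B) = p := by
      intro t
      have h1 : Subring.centerCongr (ρ t) p = p := by
        change Subring.centerCongr (ρ t) (∏ s, z s) = ∏ s, z s
        rw [map_prod]
        rw [← Equiv.prod_comp (Equiv.mulLeft t) z]
        refine Finset.prod_congr rfl fun s _ => ?_
        apply Subtype.ext
        change ρ t (1 - ρ s g) = 1 - ρ (t * s) g
        rw [hρ, map_sub, map_one]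
      exact congrArg Subtype.val h1
    obtain ⟨c, hc⟩ := hinv _ hpfix
    have hci : IsIdempotentElem c := by
      apply hinj
      rw [map_mul, hc]
      exact congrArg Subtype.val hpi
    have hcc : c ∈ Subring.center A := by
      refine Subring.mem_center_iff.2 fun a => hinj ?_
      rw [map_mul, map_mul, hc]
      exact Subring.mem_center_iff.1 p.2 _
    have hpe : φ p * e = 0 := by
      have h1 : p = (∏ s ∈ Finset.univ.erase 1, z s) * z 1 :=
        (Finset.prod_erase_mul _ _ (Finset.mem_univ 1)).symm
      rw [h1, Subring.coe_mul, map_mul, mul_assoc, hz, hρ1, map_sub, map_one, sub_mul, hge,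
        one_mul, sub_self, mul_zero]
    have hpe' : φ p * e' = e' := by
      have : ∀ q : Subring.center B, q = ∏ s, z s → φ q * e' = e' := by
        rintro q rfl
        refine Finset.prod_induction z (fun q => φ (q : B) * e' = e') ?_ (by simp) ?_
        · intro a b ha hb
          rw [Subring.coe_mul, map_mul, mul_assoc, hb, ha]
        · intro s _
          rw [hz, map_sub, map_one, sub_mul, hσ, one_mul, sub_zero]
      exact this p rfl
    rcases hf.mul_eq_or hcc hci with h | h
    · apply he'.2.2.1
      rw [← hpe', ← hfe', ← mul_assoc, ← hc, ← map_mul, ← map_mul, h]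
      simp
    · apply he.2.2.1
      rw [← hfe, ← h, ← Subring.mem_center_iff.1 hcc f, map_mul, map_mul, mul_assoc, hc, hpe,
        mul_zero]
  · rintro ⟨s, g, hg, hge, hge'⟩
    obtain ⟨f, hf, hfe'⟩ := exists_block_dominating (φ.comp ι) (fun z hz => hφc _ (hιc z hz)) he'
    refine ⟨f, hf, ?_, hfe'⟩
    have hfg : ι f * g = g := by
      refine (hg.mul_eq_or (hιc _ hf.1) (hf.2.1.map ι)).resolve_left fun h => ?_
      apply he'.2.2.1
      have : φ (ι f * g) * e' = e' := by
        rw [map_mul, mul_assoc, hge']; exact hfe'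
      rw [← this, h]; simp
    apply (ρ' s).injective
    rw [map_mul, ← hφρ, hρι, ← hge, ← mul_assoc, ← map_mul, hfg]

theorem mem_center_of_comm_includeRight {O R A : Type*} [CommRing O] [CommRing R] [Algebra O R]
    [Ring A] [Algebra O A] (x : R ⊗[O] A)
    (h : ∀ a : A, (1 ⊗ₜ[O] a : R ⊗[O] A) * x = x * (1 ⊗ₜ[O] a)) :
    x ∈ Subring.center (R ⊗[O] A) := by
  refine Subring.mem_center_iff.2 fun y => ?_
  induction y with
  | zero => simp
  | add y z hy hz => rw [add_mul, mul_add, hy, hz]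
  | tmul r a =>
    have h1 : (r ⊗ₜ[O] a : R ⊗[O] A) = algebraMap R (R ⊗[O] A) r * (1 ⊗ₜ[O] a) := by
      simp
    rw [h1, mul_assoc, h, ← mul_assoc, ← mul_assoc, Algebra.commutes]

noncomputable def galActInt (σ : K ≃ₐ[F] K) :
    ((integralClosure O K) ⊗[O] A) ≃ₐ[O] ((integralClosure O K) ⊗[O] A) :=
  Algebra.TensorProduct.congr (AlgEquiv.restrictScalars O σ).mapIntegralClosure AlgEquiv.refl

theorem galActInt_tmul (σ : K ≃ₐ[F] K) (c : integralClosure O K) (a : A) :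
    galActInt O F K A σ (c ⊗ₜ a) = (AlgEquiv.restrictScalars O σ).mapIntegralClosure c ⊗ₜ a := rfl

theorem galActInt_invariant (x : (integralClosure O K) ⊗[O] A)
    (hx : ∀ σ, galActInt O F K A σ x = x) : ∃ a : A, (1 ⊗ₜ a : (integralClosure O K) ⊗[O] A) = x := by
  let b := Module.Free.chooseBasis O A
  let b' := Algebra.TensorProduct.basis (integralClosure O K) b
  have hrepr : ∀ σ : K ≃ₐ[F] K, ∀ y i, b'.repr (galActInt O F K A σ y) i =
      (AlgEquiv.restrictScalars O σ).mapIntegralClosure (b'.repr y i) := by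
    intro σ y i
    induction y with
    | zero => simp
    | add y z hy hz => simp only [map_add, Finsupp.add_apply, hy, hz]
    | tmul c a =>
      rw [galActInt_tmul, Algebra.TensorProduct.basis_repr_tmul,
        Algebra.TensorProduct.basis_repr_tmul]
      simp
  have hO : ∀ i, ∃ o : O, algebraMap O (integralClosure O K) o = b'.repr x i := by
    intro i
    have hfix : ∀ σ : K ≃ₐ[F] K, σ (b'.repr x i : K) = b'.repr x i := by
      intro σ
      have := hrepr σ x i
      rw [hx] at this
      exact (congrArg Subtype.val this).symm
    obtain ⟨y, hy⟩ := (IsGalois.mem_range_algebraMap_iff_fixed (F := F) _).2 hfix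
    have hint : IsIntegral O y := by
      have h1 : IsIntegral O (algebraMap F K y) := hy ▸ (b'.repr x i).2
      exact (isIntegral_algebraMap_iff (algebraMap F K).injective).1 h1
    obtain ⟨o, ho⟩ := IsIntegrallyClosed.algebraMap_eq_of_integral hint
    refine ⟨o, Subtype.ext ?_⟩
    rw [← hy, ← ho, ← IsScalarTower.algebraMap_apply]
    rfl
  choose o ho using hO
  refine ⟨∑ i, o i • b i, ?_⟩
  rw [← b'.sum_repr x, TensorProduct.tmul_sum]
  refine Finset.sum_congr rfl fun i _ => ?_
  rw [← ho, Algebra.TensorProduct.basis_apply, TensorProduct.tmul_smul, algebraMap_smul]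

/-- With `O` a Noetherian integrally closed domain, `F` its fraction field,
`K/F` finite Galois such that `KA := K ⊗_O A` is split semisimple and `O_K` the integral
closure of `O` in `K`: two primitive central idempotents `e_χ`, `e_ψ` of `KA` are dominated
by the same primitive idempotent of `Z(A)` if and only if there is `σ ∈ Gal(K/F)` such that
`σ(e_χ)` and `e_ψ` are dominated by the same primitive idempotent of `Z(O_K ⊗_O A)`. -/
theorem blocks_base_iff_exists_galois_blocks_integralClosure
    (hss : IsSplitSemisimpleTensor O K A)
    (e e' : K ⊗[O] A) (he : IsBlockIdempotent e) (he' : IsBlockIdempotent e') :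
    (∃ f : A, IsBlockIdempotent f ∧
      (Algebra.TensorProduct.includeRight f : K ⊗[O] A) * e = e ∧
      (Algebra.TensorProduct.includeRight f : K ⊗[O] A) * e' = e') ↔
    (∃ (σ : K ≃ₐ[F] K) (g : (integralClosure O K) ⊗[O] A), IsBlockIdempotent g ∧
      integralClosureTensorToKTensor O K A g * (galoisActOnKTensor O F K A σ e) =
        galoisActOnKTensor O F K A σ e ∧
      integralClosureTensorToKTensor O K A g * e' = e') := by
  have hfin : Module.Finite O (integralClosure O K) :=
    IsIntegralClosure.finite O F K (integralClosure O K)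
  have hA : IsNoetherianRing A := isNoetherian_of_tower O (inferInstance : IsNoetherian O A)
  have hB : IsNoetherianRing ((integralClosure O K) ⊗[O] A) :=
    isNoetherian_of_tower O (inferInstance : IsNoetherian O ((integralClosure O K) ⊗[O] A))
  have hφι : ∀ a : A, integralClosureTensorToKTensor O K A (1 ⊗ₜ a) = 1 ⊗ₜ a := by
    intro a
    simp [integralClosureTensorToKTensor]
  have hinjOK : Function.Injective (algebraMap O (integralClosure O K)) := by
    have h : Function.Injective (algebraMap O K) := by
      rw [IsScalarTower.algebraMap_eq O F K]
      exact (algebraMap F K).injective.comp (IsFractionRing.injective O F)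
    intro x y hxy
    exact h (congrArg Subtype.val hxy)
  have main := blocks_abstract (G := K ≃ₐ[F] K)
    (Algebra.TensorProduct.includeRight : A →ₐ[O] (integralClosure O K) ⊗[O] A).toRingHom
    (integralClosureTensorToKTensor O K A).toRingHom
    (fun σ => (galActInt O F K A σ).toRingEquiv)
    (fun σ => (galoisActOnKTensor O F K A σ).toRingEquiv)
    ?_ ?_ ?_ ?_ ?_ ?_ ?_ ?_ he he'
  · have h1 : ∀ f : A, (integralClosureTensorToKTensor O K A).toRingHom
        ((Algebra.TensorProduct.includeRight : A →ₐ[O] (integralClosure O K) ⊗[O] A).toRingHom f)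
        = (Algebra.TensorProduct.includeRight f : K ⊗[O] A) := fun f => hφι f
    simp only [h1] at main
    exact main
  · intro x
    change galActInt O F K A 1 x = x
    induction x with
    | zero => simp
    | add y z hy hz => rw [map_add, hy, hz]
    | tmul c a => rfl
  · intro s t x
    change galActInt O F K A (s * t) x = galActInt O F K A s (galActInt O F K A t x)
    induction x with
    | zero => simp
    | add y z hy hz => rw [map_add, hy, hz, map_add, map_add]
    | tmul c a => rfl
  · intro s x
    change integralClosureTensorToKTensor O K A (galActInt O F K A s x) =
      galoisActOnKTensor O F K A s (integralClosureTensorToKTensor O K A x)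
    induction x with
    | zero => simp
    | add y z hy hz => rw [map_add, map_add, hy, hz, map_add, map_add]
    | tmul c a => rfl
  · intro s a
    change galActInt O F K A s (1 ⊗ₜ a) = 1 ⊗ₜ a
    rw [galActInt_tmul, map_one]
  · intro x hx
    exact galActInt_invariant O F K A x hx
  · exact Algebra.TensorProduct.includeRight_injective hinjOK
  · intro z hz
    refine mem_center_of_comm_includeRight _ fun a => ?_
    change (1 ⊗ₜ[O] a : (integralClosure O K) ⊗[O] A) * (1 ⊗ₜ[O] z) = (1 ⊗ₜ[O] z) * (1 ⊗ₜ[O] a)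
    rw [Algebra.TensorProduct.tmul_mul_tmul, Algebra.TensorProduct.tmul_mul_tmul,
      Subring.mem_center_iff.1 hz a]
  · intro z hz
    refine mem_center_of_comm_includeRight _ fun a => ?_
    change (1 ⊗ₜ[O] a : K ⊗[O] A) * integralClosureTensorToKTensor O K A z =
      integralClosureTensorToKTensor O K A z * (1 ⊗ₜ[O] a)
    rw [← hφι, ← map_mul, ← map_mul, Subring.mem_center_iff.1 hz]
end

section
/- Let O be a Noetherian integrally closed domain with field of fractions F, let A be an O-algebra that is free and finitely generated as an O-module, and let K be a finite Galois extension of F such that KA := K ⊗_O A is split semisimple, with primitive central idempotents {e_χ : χ ∈ Irr(KA)}. Then there exists a unique partition Bl(A) of Irr(KA) such that: (a) for every B ∈ Bl(A), the element e_B := Σ_{χ ∈ B} e_χ is a primitive idempotent of Z(A); (b) 1 = Σ_{B ∈ Bl(A)} e_B, and every central idempotent e of A is of the form e = Σ_{B ∈ S} e_B for some subset S ⊆ Bl(A). In particular, {e_B : B ∈ Bl(A)} is exactly the set of primitive idempotents of Z(A). -/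
open scoped TensorProduct
set_option synthInstance.maxHeartbeats 1000000
set_option maxHeartbeats 1000000

def IsCI {A : Type*} [Ring A] (e : A) : Prop := e ∈ Subring.center A ∧ IsIdempotentElem e

theorem IsBlockIdempotent.ci {A : Type*} [Ring A] {e : A} (h : IsBlockIdempotent e) : IsCI e :=
  ⟨h.1, h.2.1⟩

theorem IsCI.comm {A : Type*} [Ring A] {e : A} (h : IsCI e) (x : A) : e * x = x * e :=
  ((Subring.mem_center_iff.1 h.1) x).symm

theorem IsCI.mul {A : Type*} [Ring A] {e c : A} (he : IsCI e) (hc : IsCI c) : IsCI (e * c) := by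
  refine ⟨mul_mem he.1 hc.1, ?_⟩
  have h1 := he.2.eq
  have h2 := hc.2.eq
  show e * c * (e * c) = e * c
  rw [mul_assoc, ← mul_assoc c e c, hc.comm e, mul_assoc, h2, ← mul_assoc, h1]

theorem IsCI.sub {A : Type*} [Ring A] {e c : A} (he : IsCI e) (hc : IsCI c) (h : e * c = c) :
    IsCI (e - c) := by
  refine ⟨sub_mem he.1 hc.1, ?_⟩
  have h1 := he.2.eq
  have h2 := hc.2.eq
  have h3 := he.comm c
  show (e - c) * (e - c) = e - c
  rw [mul_sub, sub_mul, sub_mul, h1, h2, ← h3, h]; abel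

theorem block_mul {A : Type*} [Ring A] {e c : A} (he : IsBlockIdempotent e) (hc : IsCI c) :
    e * c = e ∨ e * c = 0 := by
  have h1 := he.ci.mul hc
  have hee : e * e = e := he.2.1
  have hcc : c * c = c := hc.2
  have h4 : e * (e * c) = e * c := by rw [← mul_assoc, hee]
  have h2 := he.ci.sub h1 h4
  have h3 := he.2.2.2 _ _ h1.1 h2.1 h1.2 h2.2
    (by rw [mul_sub, h1.2.eq, h1.comm e, h4, sub_self]) (by abel)
  rcases h3 with h | h
  · exact Or.inr h
  · exact Or.inl (sub_eq_zero.1 h).symm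

theorem block_orth {A : Type*} [Ring A] {e c : A} (he : IsBlockIdempotent e)
    (hc : IsBlockIdempotent c) (h : e ≠ c) : e * c = 0 := by
  rcases block_mul he hc.ci with h1 | h1
  · rcases block_mul hc he.ci with h2 | h2
    · exact absurd (by rw [← h1, he.ci.comm c, h2]) h
    · rw [he.ci.comm c, h2]
  · exact h1

theorem block_mul_sum_mem {A : Type*} [Ring A] {T : Set A} (hT : T.Finite)
    (hb : ∀ e ∈ T, IsBlockIdempotent e) {e : A} (he : e ∈ T) : e * ∑ᶠ x ∈ T, x = e := by
  rw [mul_finsum_mem' _ _ hT]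
  rw [finsum_mem_eq_finite_toFinset_sum _ hT, Finset.sum_eq_single e]
  · exact (hb e he).2.1
  · intro b hb' hbe
    exact block_orth (hb e he) (hb b (by simpa using hb')) hbe.symm
  · intro h; simp [he] at h

theorem block_mul_sum_notMem {A : Type*} [Ring A] {T : Set A} (hT : T.Finite)
    (hb : ∀ e ∈ T, IsBlockIdempotent e) {e : A} (hbe : IsBlockIdempotent e) (he : e ∉ T) :
    e * ∑ᶠ x ∈ T, x = 0 := by
  rw [mul_finsum_mem' _ _ hT]
  rw [finsum_mem_eq_finite_toFinset_sum _ hT]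
  apply Finset.sum_eq_zero
  intro b hb'
  have hb'' : b ∈ T := by simpa using hb'
  exact block_orth hbe (hb b hb'') (fun h => he (h ▸ hb''))

theorem sum_ci {A : Type*} [Ring A] {T : Set A} (hT : T.Finite)
    (hb : ∀ e ∈ T, IsBlockIdempotent e) : IsCI (∑ᶠ x ∈ T, x) := by
  constructor
  · rw [finsum_mem_eq_finite_toFinset_sum _ hT]
    exact sum_mem (fun b hb' => (hb b (by simpa using hb')).1)
  · show (∑ᶠ x ∈ T, x) * (∑ᶠ x ∈ T, x) = _
    rw [finsum_mem_mul' _ _ hT]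
    exact finsum_mem_congr rfl (fun x hx => block_mul_sum_mem hT hb hx)

theorem exists_block_le {A : Type*} [Ring A] (hfin : {e : A | IsCI e}.Finite) (n : ℕ) :
    ∀ c : A, IsCI c → c ≠ 0 → {x : A | IsCI x ∧ x * c = x}.ncard ≤ n →
      ∃ e, IsBlockIdempotent e ∧ e * c = e := by
  induction n with
  | zero =>
    intro c hc h0 hn
    have hf : {x : A | IsCI x ∧ x * c = x}.Finite := hfin.subset (fun x hx => hx.1)
    have := (Set.ncard_eq_zero hf).1 (Nat.le_zero.1 hn)
    exact absurd (show c ∈ {x : A | IsCI x ∧ x * c = x} from ⟨hc, hc.2⟩) (by simp [this])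
  | succ n ih =>
    intro c hc h0 hn
    by_cases hb : IsBlockIdempotent c
    · exact ⟨c, hb, hc.2⟩
    · have : ∃ f g : A, IsCI f ∧ IsCI g ∧ f * g = 0 ∧ c = f + g ∧ f ≠ 0 ∧ g ≠ 0 := by
        by_contra hcon
        refine hb ⟨hc.1, hc.2, h0, fun f g hf hg hf' hg' hfg hs => ?_⟩
        by_contra h
        rw [not_or] at h
        exact hcon ⟨f, g, ⟨hf, hf'⟩, ⟨hg, hg'⟩, hfg, hs, h.1, h.2⟩
      obtain ⟨f, g, hf, hg, hfg, hs, hf0, hg0⟩ := this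
      have hfc : f * c = f := by rw [hs, mul_add, hfg, add_zero]; exact hf.2
      have hcf : c * f = f := by rw [hc.comm, hfc]
      have hf' : {x : A | IsCI x ∧ x * c = x}.Finite := hfin.subset (fun x hx => hx.1)
      have hlt : {x : A | IsCI x ∧ x * f = x}.ncard < {x : A | IsCI x ∧ x * c = x}.ncard := by
        apply Set.ncard_lt_ncard _ hf'
        refine ⟨fun x hx => ⟨hx.1, ?_⟩, fun h => ?_⟩
        · calc x * c = x * f * c := by rw [hx.2]
            _ = x := by rw [mul_assoc, hfc, hx.2]
        · have h1 : c * f = c := (h (show c ∈ _ from ⟨hc, hc.2⟩)).2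
          rw [hcf] at h1
          rw [← h1] at hs
          exact hg0 (left_eq_add.1 hs)
      obtain ⟨e, he, hef⟩ := ih f hf hf0 (by omega)
      refine ⟨e, he, ?_⟩
      calc e * c = e * f * c := by rw [hef]
        _ = e := by rw [mul_assoc, hfc, hef]

theorem ci_eq_sum {A : Type*} [Ring A] (hfin : {e : A | IsCI e}.Finite) {c : A} (hc : IsCI c) :
    c = ∑ᶠ e ∈ {e : A | IsBlockIdempotent e ∧ e * c = e}, e := by
  have hT : {e : A | IsBlockIdempotent e ∧ e * c = e}.Finite :=
    hfin.subset (fun x hx => hx.1.ci)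
  have hb : ∀ e ∈ {e : A | IsBlockIdempotent e ∧ e * c = e}, IsBlockIdempotent e :=
    fun e he => he.1
  have hs := sum_ci hT hb
  have hsc : (∑ᶠ e ∈ {e : A | IsBlockIdempotent e ∧ e * c = e}, e) * c =
      ∑ᶠ e ∈ {e : A | IsBlockIdempotent e ∧ e * c = e}, e := by
    rw [finsum_mem_mul' _ _ hT]
    exact finsum_mem_congr rfl (fun x hx => hx.2)
  have hd := hc.sub hs (by rw [hc.comm, hsc])
  by_contra hne
  obtain ⟨e, he, hec⟩ := exists_block_le hfin _ _ hd (sub_ne_zero.2 hne) le_rfl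
  have hec' : e * c = e := by
    calc e * c = e * (c - _) * c := by rw [hec]
      _ = e := by rw [mul_assoc, sub_mul, hc.2.eq, hsc, hec]
  have h1 := block_mul_sum_mem hT hb (show e ∈ _ from ⟨he, hec'⟩)
  rw [mul_sub, h1, hec', sub_self] at hec
  exact he.2.2.1 hec.symm

theorem partition_aux {A R : Type*} [Ring A] [Ring R] (i : A →+* R)
    (hi : Function.Injective i) (hz : ∀ c ∈ Subring.center A, i c ∈ Subring.center R)
    (hfin : {e : R | IsCI e}.Finite) :
    ∃! P : Set (Set R),
      ((∀ B ∈ P, B.Nonempty) ∧ P.PairwiseDisjoint id ∧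
        ⋃₀ P = {e : R | IsBlockIdempotent e}) ∧
      (∀ B ∈ P, ∃ f : A, IsBlockIdempotent f ∧ i f = ∑ᶠ e ∈ B, e) ∧
      (∑ᶠ B ∈ P, ∑ᶠ e ∈ B, e) = 1 ∧
      (∀ c : A, c ∈ Subring.center A → IsIdempotentElem c →
        ∃ S ⊆ P, i c = ∑ᶠ B ∈ S, ∑ᶠ e ∈ B, e) := by
  have hiCI : ∀ c : A, IsCI c → IsCI (i c) := fun c hc => ⟨hz c hc.1, hc.2.map i⟩
  have hfinA : {e : A | IsCI e}.Finite :=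
    Set.Finite.of_finite_image (f := i)
      (hfin.subset (by rintro _ ⟨x, hx, rfl⟩; exact hiCI x hx)) hi.injOn
  let b : A → Set R := fun f => {e : R | IsBlockIdempotent e ∧ e * i f = e}
  have hbs : ∀ f, IsCI f → i f = ∑ᶠ e ∈ b f, e := fun f hf => ci_eq_sum hfin (hiCI f hf)
  have hbi : ∀ f g, IsCI f → IsCI g → b f = b g → f = g := fun f g hf hg h =>
    hi (by rw [hbs f hf, hbs g hg, h])
  let Q : Set A := {f | IsBlockIdempotent f}
  have hQ : Q.Finite := hfinA.subset (fun x hx => hx.ci)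
  have hmap : ∀ T : Set A, T.Finite → i (∑ᶠ x ∈ T, x) = ∑ᶠ x ∈ T, i x := fun T hT =>
    AddMonoidHom.map_finsum_mem (fun x => x) (i : A →+ R) hT
  have key : ∀ c : A, IsCI c → i c = ∑ᶠ B ∈ b '' {f | IsBlockIdempotent f ∧ f * c = f},
      ∑ᶠ e ∈ B, e := by
    intro c hc
    rw [finsum_mem_image (fun f hf g hg h => hbi f g hf.1.ci hg.1.ci h)]
    conv_lhs => rw [ci_eq_sum hfinA hc]
    rw [hmap _ (hQ.subset (fun x hx => hx.1))]
    exact finsum_mem_congr rfl (fun x hx => hbs x hx.1.ci)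
  have one_ci : IsCI (1 : A) := ⟨one_mem _, IsIdempotentElem.one⟩
  have hset1 : {f : A | IsBlockIdempotent f ∧ f * 1 = f} = Q := by
    ext f; simp [Q]
  have h1 : (1 : R) = ∑ᶠ f ∈ Q, i f := by
    have := ci_eq_sum hfinA one_ci
    rw [hset1] at this
    rw [← map_one i]
    conv_lhs => rw [this]
    rw [hmap _ hQ]
  have hdisj : (b '' Q).PairwiseDisjoint id := by
    rintro _ ⟨f, hf, rfl⟩ _ ⟨g, hg, rfl⟩ hne
    rw [Function.onFun, Set.disjoint_left]
    rintro e ⟨he, hef⟩ ⟨_, heg⟩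
    have hfg : f ≠ g := fun h => hne (by rw [h])
    apply he.2.2.1
    calc e = e * i f * i g := by rw [hef, heg]
      _ = 0 := by rw [mul_assoc, ← map_mul, block_orth hf hg hfg, map_zero, mul_zero]
  have hnonempty : ∀ B ∈ b '' Q, B.Nonempty := by
    rintro _ ⟨f, hf, rfl⟩
    rw [Set.nonempty_iff_ne_empty]
    intro h
    have := hbs f hf.ci
    rw [h, finsum_mem_empty] at this
    exact hf.2.2.1 (hi (by rw [this, map_zero]))
  have hunion : ⋃₀ (b '' Q) = {e : R | IsBlockIdempotent e} := by
    ext e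
    constructor
    · rintro ⟨_, ⟨f, hf, rfl⟩, he⟩
      exact he.1
    · intro he
      by_contra hcon
      apply he.2.2.1
      rw [← mul_one e, h1, mul_finsum_mem' _ _ hQ, finsum_mem_eq_finite_toFinset_sum _ hQ]
      apply Finset.sum_eq_zero
      intro f hf
      have hf : IsBlockIdempotent f := by simpa [Q] using hf
      rcases block_mul he (hiCI f hf.ci) with h | h
      · exact absurd ⟨b f, ⟨f, hf, rfl⟩, he, h⟩ hcon
      · exact h
  refine ⟨b '' Q, ⟨⟨hnonempty, hdisj, hunion⟩, ?_, ?_, ?_⟩, ?_⟩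
  · rintro _ ⟨f, hf, rfl⟩
    exact ⟨f, hf, hbs f hf.ci⟩
  · have := key 1 one_ci
    rw [hset1, map_one] at this
    exact this.symm
  · intro c hc hc'
    exact ⟨_, Set.image_mono (fun f hf => hf.1), key c ⟨hc, hc'⟩⟩
  · rintro P ⟨⟨hPn, hPd, hPu⟩, hPa, -, -⟩
    have hsub : P ⊆ b '' Q := by
      intro B hB
      obtain ⟨f, hf, hfB⟩ := hPa B hB
      have hBb : ∀ e ∈ B, IsBlockIdempotent e := fun e he => by
        have : e ∈ ⋃₀ P := ⟨B, hB, he⟩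
        rw [hPu] at this
        exact this
      have hBf : B.Finite := hfin.subset (fun e he => (hBb e he).ci)
      refine ⟨f, hf, ?_⟩
      ext e
      constructor
      · rintro ⟨he, hef⟩
        by_contra hn
        rw [hfB, block_mul_sum_notMem hBf hBb he hn] at hef
        exact he.2.2.1 hef.symm
      · intro he
        exact ⟨hBb e he, by rw [hfB, block_mul_sum_mem hBf hBb he]⟩
    refine Set.Subset.antisymm hsub ?_
    intro B hB
    obtain ⟨e, he⟩ := hnonempty B hB
    have : e ∈ ⋃₀ P := by
      rw [hPu, ← hunion]; exact ⟨B, hB, he⟩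
    obtain ⟨B', hB', he'⟩ := this
    have : B = B' := by
      by_contra hne
      exact Set.disjoint_left.1 (hdisj hB (hsub hB') hne) he he'
    rw [this]; exact hB'

theorem ci_finite (K R : Type*) [Field K] [Ring R] [Algebra K R] [Module.Finite K R] :
    {e : R | IsCI e}.Finite := by
  have : IsArtinianRing (Subalgebra.center K R) := IsArtinianRing.of_finite K _
  have h : Finite {e : Subalgebra.center K R | IsIdempotentElem e} :=
    Finite.of_injective _ (PrimeSpectrum.isIdempotentElemEquivClopens
      (R := Subalgebra.center K R)).injective
  refine (Set.Finite.image (fun x : Subalgebra.center K R => (x : R))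
    (Set.toFinite {e : Subalgebra.center K R | IsIdempotentElem e})).subset ?_
  rintro e ⟨he, he'⟩
  exact ⟨⟨e, he⟩, Subtype.ext he', rfl⟩

/-- Let `O` be a Noetherian integrally closed domain with fraction field `F`,
`A` an `O`-algebra free and finitely generated as an `O`-module, and `K/F` a finite Galois
extension such that `KA := K ⊗_O A` is split semisimple, with set of primitive central
idempotents `Irr(KA) = {e : KA | IsBlockIdempotent e}`. Then there is a unique partition
`Bl(A)` of this set such that: (a) for each part `B`, the sum `e_B := Σ_{e ∈ B} e` is a
primitive idempotent of `Z(A)`; (b) `1 = Σ_B e_B` and every central idempotent of `A` is a sum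
`Σ_{B ∈ S} e_B` for some subset `S` of the parts. -/
theorem exists_unique_block_partition
    (O : Type) [CommRing O] [IsDomain O] [IsNoetherianRing O] [IsIntegrallyClosed O]
    (F : Type) [Field F] [Algebra O F] [IsFractionRing O F]
    (K : Type) [Field K] [Algebra F K] [FiniteDimensional F K] [IsGalois F K]
    [Algebra O K] [IsScalarTower O F K]
    (A : Type) [Ring A] [Algebra O A] [Module.Finite O A] [Module.Free O A]
    (hsemisimple : IsSemisimpleRing (K ⊗[O] A))
    (hsplit : ∀ (M : Type) (_ : AddCommGroup M) (_ : Module (K ⊗[O] A) M),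
      IsSimpleModule (K ⊗[O] A) M →
        ∀ f : M →ₗ[K ⊗[O] A] M, ∃ c : K, ∀ x : M, f x = algebraMap K (K ⊗[O] A) c • x) :
    ∃! P : Set (Set (K ⊗[O] A)),
      ((∀ B ∈ P, B.Nonempty) ∧ P.PairwiseDisjoint id ∧
        ⋃₀ P = {e : K ⊗[O] A | IsBlockIdempotent e}) ∧
      (∀ B ∈ P, ∃ f : A, IsBlockIdempotent f ∧
        (Algebra.TensorProduct.includeRight f : K ⊗[O] A) = ∑ᶠ e ∈ B, e) ∧
      (∑ᶠ B ∈ P, ∑ᶠ e ∈ B, e) = 1 ∧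
      (∀ c : A, c ∈ Subring.center A → IsIdempotentElem c →
        ∃ S ⊆ P, (Algebra.TensorProduct.includeRight c : K ⊗[O] A) =
          ∑ᶠ B ∈ S, ∑ᶠ e ∈ B, e) := by
  have hinj : Function.Injective (algebraMap O K) := by
    rw [IsScalarTower.algebraMap_eq O F K]
    exact (algebraMap F K).injective.comp (IsFractionRing.injective O F)
  refine partition_aux (Algebra.TensorProduct.includeRight : A →ₐ[O] K ⊗[O] A).toRingHom
    (Algebra.TensorProduct.includeRight_injective hinj) ?_ (ci_finite K (K ⊗[O] A))
  intro c hc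
  rw [Subring.mem_center_iff] at hc ⊢
  intro x
  induction x using TensorProduct.induction_on with
  | zero => simp
  | tmul k a => simp [hc a]
  | add x y hx hy => rw [add_mul, mul_add, hx, hy]
end

section
/- Let O be a Noetherian integrally closed domain with field of fractions F, let A be an O-algebra that is free and finitely generated as an O-module, and let K be a finite Galois extension of F such that KA := K ⊗_O A is split semisimple, with primitive central idempotents {e_χ : χ ∈ Irr(KA)}. For a prime ideal p of O, write χ ∼_p ψ if e_χ and e_ψ are dominated by the same primitive idempotent of Z(O_p ⊗_O A), where O_p is the localization of O at p. Then two characters χ, ψ ∈ Irr(KA) have e_χ and e_ψ dominated by the same primitive idempotent of Z(A) if and only if there exist a finite sequence χ_0 = χ, χ_1, …, χ_n = ψ in Irr(KA) and prime ideals p_1, …, p_n of O such that χ_{j-1} ∼_{p_j} χ_j for all 1 ≤ j ≤ n. -/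
open scoped TensorProduct
set_option synthInstance.maxHeartbeats 1000000
set_option maxHeartbeats 1000000

/-- The canonical `O`-algebra map from the localization `O_p` of `O` at a prime ideal `p`
into `K` (factoring through `F`). -/
noncomputable def localizationAtPrimeToField
    (O : Type) [CommRing O] [IsDomain O]
    (F : Type) [Field F] [Algebra O F] [IsFractionRing O F]
    (K : Type) [Field K] [Algebra F K] [Algebra O K] [IsScalarTower O F K]
    (p : Ideal O) (hp : p.IsPrime) :
    Localization (@Ideal.primeCompl O _ p hp) →ₐ[O] K :=
  IsLocalization.liftAlgHom (M := @Ideal.primeCompl O _ p hp) (f := Algebra.ofId O K) (fun y => by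
    haveI := hp
    refine isUnit_iff_ne_zero.mpr fun h0 => ?_
    have hy : (y : O) ∉ p := y.2
    have hinj : Function.Injective (algebraMap O K) := by
      rw [IsScalarTower.algebraMap_eq O F K]
      exact (algebraMap F K).injective.comp (IsFractionRing.injective O F)
    have hzero : (y : O) = 0 := by
      apply hinj
      simpa [Algebra.ofId] using h0
    exact hy (by rw [hzero]; exact p.zero_mem))

/-- The induced `O`-algebra map `O_p ⊗_O A → K ⊗_O A`. -/
noncomputable def localizationTensorToKTensor
    (O : Type) [CommRing O] [IsDomain O]
    (F : Type) [Field F] [Algebra O F] [IsFractionRing O F]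
    (K : Type) [Field K] [Algebra F K] [Algebra O K] [IsScalarTower O F K]
    (A : Type) [Ring A] [Algebra O A]
    (p : Ideal O) (hp : p.IsPrime) :
    (Localization (@Ideal.primeCompl O _ p hp) ⊗[O] A) →ₐ[O] (K ⊗[O] A) :=
  Algebra.TensorProduct.map (localizationAtPrimeToField O F K p hp) (AlgHom.id O A)

/-- `χ ∼_p ψ` : the primitive central idempotents `e`, `e'` of `K ⊗_O A` are dominated by the
same primitive idempotent (block) of `Z(O_p ⊗_O A)`. -/
def SameLocalBlock
    (O : Type) [CommRing O] [IsDomain O]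
    (F : Type) [Field F] [Algebra O F] [IsFractionRing O F]
    (K : Type) [Field K] [Algebra F K] [Algebra O K] [IsScalarTower O F K]
    (A : Type) [Ring A] [Algebra O A]
    (p : Ideal O) (hp : p.IsPrime) (e e' : K ⊗[O] A) : Prop :=
  ∃ g : Localization (@Ideal.primeCompl O _ p hp) ⊗[O] A, IsBlockIdempotent g ∧
    localizationTensorToKTensor O F K A p hp g * e = e ∧
    localizationTensorToKTensor O F K A p hp g * e' = e'

lemma blk_key {R : Type*} [Ring R] {c z : R} (hc : IsBlockIdempotent c)
    (hz : z ∈ Subring.center R) (hzi : IsIdempotentElem z) : z * c = 0 ∨ z * c = c := by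
  obtain ⟨hcc, hci, hc0, hprim⟩ := hc
  have com : ∀ x, x * z = z * x := fun x => (Subring.mem_center_iff.1 hz x)
  have h1 : (1 - z) ∈ Subring.center R := Subring.sub_mem _ (Subring.one_mem _) hz
  have hzz : z * z = z := hzi
  have hcc' : c * c = c := hci
  have := hprim (z * c) ((1 - z) * c) (Subring.mul_mem _ hz hcc) (Subring.mul_mem _ h1 hcc)
    (IsIdempotentElem.mul_of_commute (com c).symm hzi hci)
    (IsIdempotentElem.mul_of_commute ((Subring.mem_center_iff.1 h1 c).symm) hzi.one_sub hci)
    (by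
      have : z * c * ((1 - z) * c) = z * ((1 - z) * c) * c := by
        rw [mul_assoc, mul_assoc z, ← Subring.mem_center_iff.1 hcc]
      rw [this, ← mul_assoc z, mul_sub, mul_one, hzz]; simp)
    (by rw [sub_mul, one_mul]; abel)
  rcases this with h | h
  · exact Or.inl h
  · right; rw [sub_mul, one_mul, sub_eq_zero] at h; exact h.symm

lemma blk_orth {R : Type*} [Ring R] {c d : R} (hc : IsBlockIdempotent c)
    (hd : IsBlockIdempotent d) (hne : c ≠ d) : c * d = 0 := by
  rcases blk_key hd hc.1 hc.2.1 with h | h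
  · exact h
  rcases blk_key hc hd.1 hd.2.1 with h' | h'
  · rw [← Subring.mem_center_iff.1 hd.1] at h'; exact h'
  · rw [← Subring.mem_center_iff.1 hd.1] at h'
    exact absurd (h'.symm.trans h) hne

open Classical in
lemma blk_mul_sum {R : Type*} [Ring R] (B : Finset R) (hB : ∀ b ∈ B, IsBlockIdempotent b)
    {c : R} (hc : IsBlockIdempotent c) : (∑ b ∈ B, b) * c = if c ∈ B then c else 0 := by
  rw [Finset.sum_mul]
  have : ∀ b ∈ B, b * c = if b = c then c else 0 := by
    intro b hb
    split_ifs with h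
    · rw [h]; exact hc.2.1
    · exact blk_orth (hB b hb) hc h
  rw [Finset.sum_congr rfl this]
  simp

open Classical in
lemma blk_decomp_aux {R : Type*} [Ring R] [IsNoetherianRing R] (I : Ideal R) :
    ∀ f : R, I = Ideal.span {1 - f} → f ∈ Subring.center R → IsIdempotentElem f →
    ∃ B : Finset R, (∀ b ∈ B, IsBlockIdempotent b) ∧ ∑ b ∈ B, b = f := by
  induction I using WellFoundedGT.induction with
  | _ I ih =>
  intro f hI hf hfi
  by_cases h0 : f = 0
  · exact ⟨∅, by simp, by simp [h0]⟩
  by_cases hb : IsBlockIdempotent f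
  · exact ⟨{f}, by simpa using hb, by simp⟩
  have : ∃ g h : R, g ∈ Subring.center R ∧ h ∈ Subring.center R ∧ IsIdempotentElem g ∧
      IsIdempotentElem h ∧ g * h = 0 ∧ f = g + h ∧ g ≠ 0 ∧ h ≠ 0 := by
    by_contra hcon
    apply hb
    refine ⟨hf, hfi, h0, ?_⟩
    intro g h a1 a2 a3 a4 a5 a6
    by_contra hn
    push Not at hn
    exact hcon ⟨g, h, a1, a2, a3, a4, a5, a6, hn.1, hn.2⟩
  obtain ⟨g, h, hg, hh, hgi, hhi, hgh, hfe, hg0, hh0⟩ := this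
  have hhg : h * g = 0 := by rw [Subring.mem_center_iff.1 hg]; exact hgh
  have key : ∀ g h : R, IsIdempotentElem g → IsIdempotentElem h → g * h = 0 → h * g = 0 →
      f = g + h → h ≠ 0 → Ideal.span {1 - g} > I := by
    intro g h hgi hhi hgh hhg hfe hh0
    have hgi' : g * g = g := hgi
    have hhi' : h * h = h := hhi
    rw [hI]
    refine lt_of_le_of_ne ?_ ?_
    · rw [Ideal.span_singleton_le_iff_mem, Ideal.mem_span_singleton']
      refine ⟨1 - f, ?_⟩
      rw [hfe]; simp only [sub_mul, mul_sub, add_mul, mul_one, one_mul, hgi', hhg]; abel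
    · intro heq
      have hm : h ∈ Ideal.span {1 - g} := by
        rw [Ideal.mem_span_singleton']
        exact ⟨h, by rw [mul_sub, hhg]; simp⟩
      rw [← heq, Ideal.mem_span_singleton'] at hm
      obtain ⟨a, ha⟩ := hm
      have : h = a * (1 - f) * h := by rw [ha, hhi']
      rw [hfe, mul_assoc] at this
      apply hh0
      rw [this, sub_mul, add_mul, hgh, hhi']; simp
  obtain ⟨B, hB, hBs⟩ := ih _ (key g h hgi hhi hgh hhg hfe hh0) g rfl hg hgi
  obtain ⟨C, hC, hCs⟩ := ih _ (key h g hhi hgi hhg hgh (by rw [hfe, add_comm]) hg0) h rfl hh hhi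
  refine ⟨B ∪ C, ?_, ?_⟩
  · intro b hb
    rcases Finset.mem_union.1 hb with hb | hb
    · exact hB b hb
    · exact hC b hb
  · rw [Finset.sum_union, hBs, hCs, hfe]
    rw [Finset.disjoint_left]
    intro b hb hb'
    have h1 := blk_mul_sum B hB (hB b hb)
    have h2 := blk_mul_sum C hC (hB b hb)
    rw [if_pos hb, hBs] at h1
    rw [if_pos hb', hCs] at h2
    apply (hB b hb).2.2.1
    rw [← h1, ← h2, ← mul_assoc, hgh, zero_mul]

lemma blk_decomp (R : Type*) [Ring R] [IsNoetherianRing R] :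
    ∃ B : Finset R, (∀ b, b ∈ B ↔ IsBlockIdempotent b) ∧ ∑ b ∈ B, b = 1 := by
  classical
  obtain ⟨B, hB, hs⟩ := blk_decomp_aux (R := R) _ 1 rfl (Subring.one_mem _) IsIdempotentElem.one
  refine ⟨B, fun b => ⟨hB b, fun hb => ?_⟩, hs⟩
  have := blk_mul_sum B hB hb
  by_contra hn
  rw [if_neg hn, hs, one_mul] at this
  exact hb.2.2.1 this

lemma blk_dom {R S : Type*} [Ring R] [Ring S] [IsNoetherianRing R] (φ : R →+* S)
    (hφ : ∀ z ∈ Subring.center R, φ z ∈ Subring.center S) {c : S} (hc : IsBlockIdempotent c) :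
    ∃ f, IsBlockIdempotent f ∧ φ f * c = c := by
  obtain ⟨B, hB, hs⟩ := blk_decomp R
  by_contra hn
  apply hc.2.2.1
  have h1 : c = ∑ b ∈ B, φ b * c := by
    rw [← Finset.sum_mul, ← map_sum, hs]; simp
  rw [h1]
  refine Finset.sum_eq_zero fun b hb => ?_
  have hb' := (hB b).1 hb
  rcases blk_key hc (hφ b hb'.1) (hb'.2.1.map φ) with h | h
  · exact h
  · exact absurd ⟨b, hb', h⟩ hn

lemma blk_center {O L A R : Type*} [CommRing O] [CommRing L] [Algebra O L] [Ring A] [Algebra O A]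
    [Ring R] (φ : R →+* L ⊗[O] A) (h : ∀ a : A, ∃ r, φ r = 1 ⊗ₜ a) :
    ∀ z ∈ Subring.center R, φ z ∈ Subring.center (L ⊗[O] A) := by
  intro z hz
  rw [Subring.mem_center_iff]
  intro x
  induction x using TensorProduct.induction_on with
  | zero => simp
  | add x y hx hy => rw [add_mul, mul_add, hx, hy]
  | tmul l a =>
    obtain ⟨r, hr⟩ := h a
    have h1 : (l ⊗ₜ a : L ⊗[O] A) = algebraMap L (L ⊗[O] A) l * φ r := by
      rw [hr, Algebra.TensorProduct.algebraMap_apply]; simp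
    rw [h1, mul_assoc, ← map_mul, Subring.mem_center_iff.1 hz r, map_mul, ← mul_assoc,
      ← mul_assoc, Algebra.commutes]

lemma blk_inter {O : Type} [CommRing O] [IsDomain O]
    {F : Type} [Field F] [Algebra O F] [IsFractionRing O F]
    {K : Type} [Field K] [Algebra F K] [Algebra O K] [IsScalarTower O F K] (k : K)
    (h : ∀ (p : Ideal O) (hp : p.IsPrime), ∃ r, localizationAtPrimeToField O F K p hp r = k) :
    ∃ r : O, algebraMap O K r = k := by
  let I : Ideal O :=
    { carrier := {r | ∃ a, algebraMap O K a = algebraMap O K r * k}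
      zero_mem' := ⟨0, by simp⟩
      add_mem' := by
        rintro x y ⟨a, ha⟩ ⟨b, hb⟩
        exact ⟨a + b, by rw [map_add, map_add, add_mul, ha, hb]⟩
      smul_mem' := by
        rintro x y ⟨a, ha⟩
        exact ⟨x * a, by rw [smul_eq_mul, map_mul, map_mul, mul_assoc, ha]⟩ }
  by_cases hI : I = ⊤
  · have : (1 : O) ∈ I := by rw [hI]; trivial
    obtain ⟨a, ha⟩ := this
    exact ⟨a, by simpa using ha⟩
  · obtain ⟨m, hm, hIm⟩ := Ideal.exists_le_maximal I hI
    have hp := hm.isPrime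
    obtain ⟨r, hr⟩ := h m hp
    obtain ⟨⟨a, s⟩, has⟩ := IsLocalization.surj (m.primeCompl) r
    exfalso
    apply s.2
    apply hIm
    refine ⟨a, ?_⟩
    have := congrArg (localizationAtPrimeToField O F K m hp) has
    rw [map_mul, AlgHom.commutes, AlgHom.commutes, hr] at this
    rw [← this, mul_comm]

lemma blk_descend {O : Type} [CommRing O] [IsDomain O]
    {F : Type} [Field F] [Algebra O F] [IsFractionRing O F]
    {K : Type} [Field K] [Algebra F K] [Algebra O K] [IsScalarTower O F K]
    {A : Type} [Ring A] [Algebra O A] [Module.Finite O A] [Module.Free O A] (s : K ⊗[O] A)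
    (h : ∀ (p : Ideal O) (hp : p.IsPrime), ∃ r, localizationTensorToKTensor O F K A p hp r = s) :
    ∃ a : A, (1 : K) ⊗ₜ[O] a = s := by
  let b := Module.Free.chooseBasis O A
  let B := Algebra.TensorProduct.basis K b
  have h1 : ∀ i, ∃ r : O, algebraMap O K r = B.repr s i := by
    intro i
    apply blk_inter (F := F)
    intro p hp
    obtain ⟨x, hx⟩ := h p hp
    rw [← hx]
    clear hx h
    induction x using TensorProduct.induction_on with
    | zero => exact ⟨0, by simp⟩
    | add x y hx hy =>
      obtain ⟨u, hu⟩ := hx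
      obtain ⟨v, hv⟩ := hy
      exact ⟨u + v, by simp [hu, hv]⟩
    | tmul l a =>
      refine ⟨l * algebraMap O _ (b.repr a i), ?_⟩
      rw [map_mul, AlgHom.commutes]
      simp [localizationTensorToKTensor, B, Algebra.smul_def, mul_comm]
  choose r hr using h1
  refine ⟨∑ i, r i • b i, ?_⟩
  rw [← B.sum_repr s, TensorProduct.tmul_sum]
  refine Finset.sum_congr rfl fun i _ => ?_
  rw [← hr]
  simp [B, TensorProduct.smul_tmul']

/-- With `O` a Noetherian integrally closed domain, `F` its fraction field,
`K/F` finite Galois with `KA := K ⊗_O A` split semisimple: two primitive central idempotents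
`e_χ`, `e_ψ` of `KA` are dominated by the same primitive idempotent of `Z(A)` if and only if
there is a finite sequence `χ = χ_0, χ_1, …, χ_n = ψ` in `Irr(KA)` and prime ideals
`p_1, …, p_n` of `O` with `χ_{j-1} ∼_{p_j} χ_j` for all `j`. -/
theorem blocks_iff_chain_of_local_blocks
    (O : Type) [CommRing O] [IsDomain O] [IsNoetherianRing O] [IsIntegrallyClosed O]
    (F : Type) [Field F] [Algebra O F] [IsFractionRing O F]
    (K : Type) [Field K] [Algebra F K] [FiniteDimensional F K] [IsGalois F K]
    [Algebra O K] [IsScalarTower O F K]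
    (A : Type) [Ring A] [Algebra O A] [Module.Finite O A] [Module.Free O A]
    (hsemisimple : IsSemisimpleRing (K ⊗[O] A))
    (hsplit : ∀ (M : Type) (_ : AddCommGroup M) (_ : Module (K ⊗[O] A) M),
      IsSimpleModule (K ⊗[O] A) M →
        ∀ f : M →ₗ[K ⊗[O] A] M, ∃ c : K, ∀ x : M, f x = algebraMap K (K ⊗[O] A) c • x)
    (e e' : K ⊗[O] A) (he : IsBlockIdempotent e) (he' : IsBlockIdempotent e') :
    (∃ f : A, IsBlockIdempotent f ∧
      (Algebra.TensorProduct.includeRight f : K ⊗[O] A) * e = e ∧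
      (Algebra.TensorProduct.includeRight f : K ⊗[O] A) * e' = e') ↔
    (∃ (n : ℕ) (c : ℕ → K ⊗[O] A), c 0 = e ∧ c n = e' ∧
      (∀ j ≤ n, IsBlockIdempotent (c j)) ∧
      ∀ j < n, ∃ (p : Ideal O) (hp : p.IsPrime),
        SameLocalBlock O F K A p hp (c j) (c (j + 1))) := by
  classical
  haveI hNA : IsNoetherianRing A := isNoetherian_of_tower O inferInstance
  haveI hNK : IsNoetherianRing (K ⊗[O] A) := isNoetherian_of_tower K inferInstance
  have hNp : ∀ (p : Ideal O) (hp : p.IsPrime),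
      IsNoetherianRing (Localization (@Ideal.primeCompl O _ p hp) ⊗[O] A) := by
    intro p hp
    haveI : IsNoetherianRing (Localization (@Ideal.primeCompl O _ p hp)) :=
      IsLocalization.isNoetherianRing (@Ideal.primeCompl O _ p hp) _ inferInstance
    exact isNoetherian_of_tower (Localization (@Ideal.primeCompl O _ p hp)) inferInstance
  let ι : A →+* K ⊗[O] A :=
    (Algebra.TensorProduct.includeRight : A →ₐ[O] K ⊗[O] A).toRingHom
  have hι : ∀ a, (Algebra.TensorProduct.includeRight a : K ⊗[O] A) = ι a := fun _ => rfl
  have hιc := blk_center ι (fun a => ⟨a, rfl⟩)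
  have hφ1 : ∀ (p : Ideal O) (hp : p.IsPrime) (a : A),
      localizationTensorToKTensor O F K A p hp (1 ⊗ₜ a) = ι a := by
    intro p hp a
    change (Algebra.TensorProduct.map _ _) _ = (1 : K) ⊗ₜ[O] a
    simp
  have hφc : ∀ (p : Ideal O) (hp : p.IsPrime), ∀ z ∈ Subring.center _,
      localizationTensorToKTensor O F K A p hp z ∈ Subring.center (K ⊗[O] A) := fun p hp =>
    blk_center (localizationTensorToKTensor O F K A p hp).toRingHom
      (fun a => ⟨1 ⊗ₜ a, hφ1 p hp a⟩)
  simp only [hι]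
  constructor
  · rintro ⟨f, hf, hfe, hfe'⟩
    obtain ⟨B, hB, hBs⟩ := blk_decomp (K ⊗[O] A)
    let reach : K ⊗[O] A → Prop := fun d => ∃ (n : ℕ) (c : ℕ → K ⊗[O] A), c 0 = e ∧ c n = d ∧
      (∀ j ≤ n, IsBlockIdempotent (c j)) ∧
      ∀ j < n, ∃ (p : Ideal O) (hp : p.IsPrime),
        SameLocalBlock O F K A p hp (c j) (c (j + 1))
    have hre : reach e := ⟨0, fun _ => e, rfl, rfl, fun _ _ => he, by simp⟩
    have hstep : ∀ d d' p hp, reach d → IsBlockIdempotent d' →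
        SameLocalBlock O F K A p hp d d' → reach d' := by
      rintro d d' p hp ⟨n, c, h0, hn, hb, hs⟩ hd' hdd
      refine ⟨n + 1, fun j => if j ≤ n then c j else d', by simp [h0], by simp, ?_, ?_⟩
      · intro j _
        dsimp only
        split_ifs with h
        · exact hb j h
        · exact hd'
      · intro j hj
        dsimp only
        rw [if_pos (by omega : j ≤ n)]
        split_ifs with h
        · exact hs j (by omega)
        · have : j = n := by omega
          subst this
          rw [hn]
          exact ⟨p, hp, hdd⟩
    change reach e'
    let S := B.filter reach
    have hSb : ∀ b ∈ S, IsBlockIdempotent b := fun b hb => (hB b).1 (Finset.mem_filter.1 hb).1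
    have hs : ∀ (p : Ideal O) (hp : p.IsPrime),
        ∃ r, localizationTensorToKTensor O F K A p hp r = ∑ c ∈ S, c := by
      intro p hp
      haveI := hNp p hp
      obtain ⟨G, hG, hGs⟩ :=
        blk_decomp (Localization (@Ideal.primeCompl O _ p hp) ⊗[O] A)
      set φ := localizationTensorToKTensor O F K A p hp with hφ
      have hg : ∀ g ∈ G, φ g * (∑ c ∈ S, c) ∈ φ.range := by
        intro g hg
        have hgb := (hG g).1 hg
        have hk : ∀ c, IsBlockIdempotent c → φ g * c = 0 ∨ φ g * c = c := fun c hc =>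
          blk_key hc (hφc p hp g hgb.1) (hgb.2.1.map φ)
        by_cases hex : ∃ c ∈ S, φ g * c = c
        · obtain ⟨c, hc, hgc⟩ := hex
          have : φ g * (∑ c ∈ S, c) = φ g := by
            conv_rhs => rw [← mul_one (φ g), ← hBs, Finset.mul_sum]
            rw [Finset.mul_sum]
            refine Finset.sum_subset (Finset.filter_subset _ _) ?_
            intro d hd hdS
            rcases hk d ((hB d).1 hd) with h | h
            · exact h
            · exact absurd (Finset.mem_filter.2 ⟨hd, hstep c d p hp (Finset.mem_filter.1 hc).2
                ((hB d).1 hd) ⟨g, hgb, hgc, h⟩⟩) hdS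
          rw [this]
          exact ⟨g, rfl⟩
        · have : φ g * (∑ c ∈ S, c) = 0 := by
            rw [Finset.mul_sum]
            refine Finset.sum_eq_zero fun c hc => ?_
            rcases hk c (hSb c hc) with h | h
            · exact h
            · exact absurd ⟨c, hc, h⟩ hex
          rw [this]
          exact φ.range.zero_mem
      have : (∑ c ∈ S, c) = ∑ g ∈ G, φ g * (∑ c ∈ S, c) := by
        rw [← Finset.sum_mul, ← map_sum, hGs]; simp
      have h2 : (∑ c ∈ S, c) ∈ φ.range := by
        rw [this]
        exact φ.range.sum_mem hg
      exact h2
    obtain ⟨a, ha⟩ := blk_descend _ hs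
    replace ha : ι a = ∑ c ∈ S, c := ha
    have hinjOK : Function.Injective (algebraMap O K) := by
      rw [IsScalarTower.algebraMap_eq O F K]
      exact (algebraMap F K).injective.comp (IsFractionRing.injective O F)
    have hinj : Function.Injective ι :=
      Algebra.TensorProduct.includeRight_injective hinjOK
    have hsi : (∑ c ∈ S, c) * (∑ c ∈ S, c) = ∑ c ∈ S, c := by
      conv_lhs => rw [Finset.mul_sum]
      refine Finset.sum_congr rfl fun c hc => ?_
      rw [blk_mul_sum S hSb (hSb c hc), if_pos hc]
    have hsc : (∑ c ∈ S, c) ∈ Subring.center (K ⊗[O] A) :=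
      Subring.sum_mem _ fun c hc => (hSb c hc).1
    have hac : a ∈ Subring.center A := by
      rw [Subring.mem_center_iff]
      intro x
      apply hinj
      rw [map_mul, map_mul, ha]
      exact Subring.mem_center_iff.1 hsc _
    have hai : IsIdempotentElem a := by
      apply hinj
      rw [map_mul, ha, hsi]
    have hse : ι a * e = e := by
      rw [ha, blk_mul_sum S hSb he, if_pos (Finset.mem_filter.2 ⟨(hB e).2 he, hre⟩)]
    have haf : a * f = f := by
      rcases blk_key hf hac hai with h | h
      · exfalso
        apply he.2.2.1
        rw [← hse, ← hfe, ← mul_assoc, ← map_mul, h]; simp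
      · exact h
    have hse' : ι a * e' = e' := by
      rw [← hfe', ← mul_assoc, ← map_mul, haf]
    by_contra hn
    rw [ha, blk_mul_sum S hSb he', if_neg (fun h => hn (Finset.mem_filter.1 h).2)] at hse'
    exact he'.2.2.1 hse'.symm
  · rintro ⟨n, c, h0, hn, hb, hs⟩
    obtain ⟨f, hf, hfe⟩ := blk_dom ι hιc he
    refine ⟨f, hf, hfe, ?_⟩
    have : ∀ j ≤ n, ι f * c j = c j := by
      intro j
      induction j with
      | zero => intro _; rw [h0]; exact hfe
      | succ j ih =>
        intro hj
        have ih := ih (by omega)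
        obtain ⟨p, hp, g, hg, h1, h2⟩ := hs j (by omega)
        have hjc := blk_center (O := O) (A := A)
          (Algebra.TensorProduct.includeRight :
            A →ₐ[O] Localization (@Ideal.primeCompl O _ p hp) ⊗[O] A).toRingHom
          (fun a => ⟨a, rfl⟩) f hf.1
        have hji := hf.2.1.map (Algebra.TensorProduct.includeRight :
            A →ₐ[O] Localization (@Ideal.primeCompl O _ p hp) ⊗[O] A).toRingHom
        have hfg : (1 ⊗ₜ f) * g = g := by
          rcases blk_key hg hjc hji with h | h
          · exfalso
            apply (hb j (by omega)).2.2.1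
            have h3 := congrArg (localizationTensorToKTensor O F K A p hp) h
            rw [map_mul, map_zero] at h3
            have h4 : ι f * localizationTensorToKTensor O F K A p hp g = 0 := by
              rw [← hφ1 p hp f]; exact h3
            rw [← ih, ← h1, ← mul_assoc, h4, zero_mul]
          · exact h
        rw [← h2, ← mul_assoc, ← hφ1 p hp f, ← map_mul, hfg]
    rw [← hn]
    exact this n le_rfl
end

section
/- Let K be a number field contained in ℚ(μ_∞) with ring of integers Z_K, and let R_K(y) := Z_K[y, y^{-1}, (y^n − 1)^{-1}_{n ≥ 1}] be the Rouquier ring of K. The group of units of R_K(y) consists exactly of the elements of the form u · y^n · Π_Φ Φ(y)^{n_Φ}, where u is a unit of Z_K, n ∈ ℤ, Φ runs over the set of K-cyclotomic polynomials, n_Φ ∈ ℤ, and n_Φ = 0 for all but finitely many Φ. -/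
/-- A `K`-cyclotomic polynomial: the minimal polynomial over `K` of a root of unity;
equivalently, a monic irreducible divisor of `X^n - 1` for some `n ≥ 1`. -/
def IsKCyclotomic {K : Type*} [Field K] (Φ : Polynomial K) : Prop :=
  Φ.Monic ∧ Irreducible Φ ∧ ∃ n : ℕ, 0 < n ∧ Φ ∣ (Polynomial.X ^ n - 1)

/-- The Rouquier ring `R_K(y) = Z_K[y, y^{-1}, (y^n - 1)^{-1}_{n ≥ 1}]`, realized as the
subring of the rational function field `K(y)` generated by `Z_K`, `y`, `y^{-1}` and the
inverses `(y^n - 1)^{-1}` for `n ≥ 1`. -/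
noncomputable def RouquierRing (K : Type*) [Field K] [NumberField K] : Subring (RatFunc K) :=
  Subring.closure
    ((algebraMap K (RatFunc K)) '' Set.range (algebraMap (NumberField.RingOfIntegers K) K)
      ∪ {RatFunc.X, RatFunc.X⁻¹}
      ∪ {x | ∃ n : ℕ, 0 < n ∧ x = (RatFunc.X ^ n - 1)⁻¹})

open Polynomial in
noncomputable def rqPhi (K : Type*) [Field K] [NumberField K] :
    (NumberField.RingOfIntegers K)[X] →+* RatFunc K :=
  (algebraMap K[X] (RatFunc K)).comp (mapRingHom (algebraMap (NumberField.RingOfIntegers K) K))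

open Polynomial in
noncomputable def rqM (R : Type*) [CommRing R] : Submonoid R[X] :=
  Submonoid.closure ({X} ∪ {p | ∃ n : ℕ, 0 < n ∧ p = X ^ n - 1})

section
open Polynomial UniqueFactorizationMonoid
variable {K : Type*} [Field K] [NumberField K]

theorem rqPhi_inj : Function.Injective (rqPhi K) := by
  unfold rqPhi
  rw [RingHom.coe_comp]
  exact (RatFunc.algebraMap_injective K).comp
    (map_injective _ (NumberField.RingOfIntegers.coe_injective))

theorem rqPhi_X : rqPhi K X = RatFunc.X := by simp [rqPhi]

theorem rqPhi_C (a : NumberField.RingOfIntegers K) :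
    rqPhi K (C a) = algebraMap K (RatFunc K) (algebraMap _ K a) := by
  simp [rqPhi]

theorem rqM_monic {R : Type*} [CommRing R] {p : R[X]} (hp : p ∈ rqM R) :
    p.Monic := by
  induction hp using Submonoid.closure_induction with
  | mem x hx =>
    rcases hx with rfl | ⟨n, hn, rfl⟩
    · exact monic_X
    · simpa using monic_X_pow_sub_C (1 : R) hn.ne'
  | one => exact monic_one
  | mul x y _ _ hx hy => exact hx.mul hy

theorem rq_frac {x : RatFunc K} (hx : x ∈ RouquierRing K) :
    ∃ P, ∃ D ∈ rqM (NumberField.RingOfIntegers K), x * rqPhi K D = rqPhi K P := by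
  induction hx using Subring.closure_induction with
  | mem x hx =>
    rcases hx with (⟨_, ⟨a, rfl⟩, rfl⟩ | rfl | rfl) | ⟨n, hn, rfl⟩
    · exact ⟨C a, 1, one_mem _, by rw [map_one, mul_one, rqPhi_C]⟩
    · exact ⟨X, 1, one_mem _, by rw [map_one, mul_one, rqPhi_X]⟩
    · exact ⟨1, X, Submonoid.subset_closure (Or.inl rfl), by
        rw [map_one, rqPhi_X, inv_mul_cancel₀ RatFunc.X_ne_zero]⟩
    · have hm : (X ^ n - 1 : (NumberField.RingOfIntegers K)[X]) ∈ rqM _ :=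
        Submonoid.subset_closure (Or.inr ⟨n, hn, rfl⟩)
      refine ⟨1, X ^ n - 1, hm, ?_⟩
      have h0 : rqPhi K (X ^ n - 1) ≠ 0 :=
        (map_ne_zero_iff _ rqPhi_inj).2 (rqM_monic hm).ne_zero
      rw [map_sub, map_pow, map_one, rqPhi_X] at h0 ⊢
      exact inv_mul_cancel₀ h0
  | zero => exact ⟨0, 1, one_mem _, by simp⟩
  | one => exact ⟨1, 1, one_mem _, by simp⟩
  | add x y _ _ hx hy =>
    obtain ⟨P, D, hD, h⟩ := hx
    obtain ⟨Q, E, hE, h'⟩ := hy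
    refine ⟨P * E + Q * D, D * E, mul_mem hD hE, ?_⟩
    simp only [map_add, map_mul, ← h, ← h']; ring
  | neg x _ hx =>
    obtain ⟨P, D, hD, h⟩ := hx
    exact ⟨-P, D, hD, by rw [map_neg, ← h, neg_mul]⟩
  | mul x y _ _ hx hy =>
    obtain ⟨P, D, hD, h⟩ := hx
    obtain ⟨Q, E, hE, h'⟩ := hy
    refine ⟨P * Q, D * E, mul_mem hD hE, ?_⟩
    simp only [map_mul, ← h, ← h']; ring

theorem rqPhi_mem (P) : rqPhi K P ∈ RouquierRing K := by
  induction P using Polynomial.induction_on' with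
  | add p q hp hq => rw [map_add]; exact add_mem hp hq
  | monomial n a =>
    rw [← C_mul_X_pow_eq_monomial, map_mul, map_pow, rqPhi_X, rqPhi_C]
    refine mul_mem (Subring.subset_closure ?_) (pow_mem (Subring.subset_closure ?_) n)
    · exact Or.inl (Or.inl ⟨_, ⟨a, rfl⟩, rfl⟩)
    · exact Or.inl (Or.inr (Or.inl rfl))

theorem rq_lift {n : ℕ} (hn : 0 < n) {g : K[X]} (hg : g.Monic) (h : g ∣ X ^ n - 1) :
    algebraMap K[X] (RatFunc K) g ∈ RouquierRing K := by
  have hm : (X ^ n - 1 : (NumberField.RingOfIntegers K)[X]).Monic :=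
    rqM_monic (Submonoid.subset_closure (Or.inr ⟨n, hn, rfl⟩))
  obtain ⟨g', hg'⟩ := IsIntegrallyClosed.eq_map_mul_C_of_dvd (R := NumberField.RingOfIntegers K) K hm
    (g := g) (by simpa using h)
  rw [hg.leadingCoeff, C_1, mul_one] at hg'
  rw [← hg']
  exact rqPhi_mem g'

theorem rq_cyc {Φ : K[X]} (h : IsKCyclotomic Φ) :
    algebraMap K[X] (RatFunc K) Φ ∈ RouquierRing K ∧
    (algebraMap K[X] (RatFunc K) Φ)⁻¹ ∈ RouquierRing K := by
  obtain ⟨h1, -, n, hn, Ψ, hd⟩ := h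
  have hm : (X ^ n - 1 : K[X]).Monic :=
    rqM_monic (Submonoid.subset_closure (Or.inr ⟨n, hn, rfl⟩))
  refine ⟨rq_lift hn h1 ⟨Ψ, hd⟩, ?_⟩
  have h2 : Ψ.Monic := h1.of_mul_monic_left (hd ▸ hm)
  have h3 := rq_lift hn h2 (hd ▸ Dvd.intro_left _ rfl)
  have h4 : ((RatFunc.X ^ n - 1)⁻¹ : RatFunc K) ∈ RouquierRing K :=
    Subring.subset_closure (Or.inr ⟨n, hn, rfl⟩)
  have h5 : (RatFunc.X ^ n - 1 : RatFunc K) =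
      algebraMap K[X] (RatFunc K) Φ * algebraMap K[X] (RatFunc K) Ψ := by
    rw [← map_mul, ← hd]; simp
  have h6 : algebraMap K[X] (RatFunc K) Ψ ≠ 0 := RatFunc.algebraMap_ne_zero h2.ne_zero
  have := mul_mem h4 h3
  rwa [h5, mul_inv, mul_assoc, inv_mul_cancel₀ h6, mul_one] at this

theorem rq_zpow {x : RatFunc K} (h : x ∈ RouquierRing K) (h' : x⁻¹ ∈ RouquierRing K) (n : ℤ) :
    x ^ n ∈ RouquierRing K := by
  cases n with
  | ofNat n => simpa using pow_mem h n
  | negSucc n => rw [zpow_negSucc, ← inv_pow]; exact pow_mem h' _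

theorem rq_dvd {f : K[X]} (hf : Irreducible f) (hm : f.Monic)
    {D} (hD : D ∈ rqM (NumberField.RingOfIntegers K))
    (h : f ∣ D.map (algebraMap _ K)) : f = X ∨ IsKCyclotomic f := by
  induction hD using Submonoid.closure_induction with
  | mem x hx =>
    rcases hx with rfl | ⟨n, hn, rfl⟩
    · left
      rw [map_X] at h
      exact eq_of_monic_of_associated hm monic_X (hf.associated_of_dvd irreducible_X h)
    · right
      exact ⟨hm, hf, n, hn, by simpa using h⟩
  | one => rw [Polynomial.map_one] at h; exact absurd (isUnit_of_dvd_one h) hf.not_isUnit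
  | mul x y _ _ hx hy =>
    rw [Polynomial.map_mul] at h
    rcases hf.prime.dvd_or_dvd h with h | h
    · exact hx h
    · exact hy h

open Classical in
theorem rq_prod {p : K[X]} (hp : p.Monic) {T : Finset K[X]}
    (hT : (normalizedFactors p).toFinset ⊆ T) :
    p = ∏ f ∈ T, f ^ (normalizedFactors p).count f := by
  rw [← Finset.prod_multiset_count_of_subset _ _ hT, prod_normalizedFactors_eq hp.ne_zero,
    hp.normalize_eq_self]

open Classical in
theorem rq_main (u v : RatFunc K) (hu : u ∈ RouquierRing K) (hv : v ∈ RouquierRing K)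
    (huv : u * v = 1) :
      ∃ (w : NumberField.RingOfIntegers K) (_ : IsUnit w) (n : ℤ)
        (S : Finset (Polynomial K)) (e : Polynomial K → ℤ),
        (∀ Φ ∈ S, IsKCyclotomic Φ) ∧
        u = algebraMap K (RatFunc K) (algebraMap (NumberField.RingOfIntegers K) K w) *
            RatFunc.X ^ n * ∏ Φ ∈ S, (algebraMap (Polynomial K) (RatFunc K) Φ) ^ (e Φ) := by
  obtain ⟨P, D, hD, h⟩ := rq_frac hu
  obtain ⟨Q, E, hE, h'⟩ := rq_frac hv
  have hDE : D * E ∈ rqM _ := mul_mem hD hE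
  have hPQ : P * Q = D * E := by
    apply rqPhi_inj
    rw [map_mul, map_mul, ← h, ← h']
    linear_combination (rqPhi K D * rqPhi K E) * huv
  have hlc : P.leadingCoeff * Q.leadingCoeff = 1 := by
    rw [← leadingCoeff_mul, hPQ, (rqM_monic hDE).leadingCoeff]
  have hP1 : (C Q.leadingCoeff * P).Monic := by
    rw [Monic, leadingCoeff_mul, leadingCoeff_C, mul_comm, hlc]
  set P1 := C Q.leadingCoeff * P with hP1d
  have hP : P = C P.leadingCoeff * P1 := by
    rw [hP1d, ← mul_assoc, ← C_mul, hlc, C_1, one_mul]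
  have hP1dvd : P1 ∣ D * E := by
    rw [← hPQ]; exact (Dvd.intro_left _ hP.symm).trans (Dvd.intro _ rfl)
  set a := algebraMap (NumberField.RingOfIntegers K) K with ha
  have hp : (P1.map a).Monic := hP1.map a
  have hd : (D.map a).Monic := (rqM_monic hD).map a
  set T := (normalizedFactors (P1.map a)).toFinset ∪ (normalizedFactors (D.map a)).toFinset with hT
  let e : K[X] → ℤ := fun f => ((normalizedFactors (P1.map a)).count f : ℤ)
    - (normalizedFactors (D.map a)).count f
  have hTirr : ∀ f ∈ T, f = X ∨ IsKCyclotomic f := by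
    intro f hf
    have key : ∀ q : K[X], q ≠ 0 → q ∣ (D * E).map a → f ∈ normalizedFactors q →
        f = X ∨ IsKCyclotomic f := by
      intro q hq hqd hfq
      have h1 := irreducible_of_normalized_factor f hfq
      have h2 : f.Monic := by
        rw [← normalize_normalized_factor f hfq]; exact monic_normalize h1.ne_zero
      exact rq_dvd h1 h2 hDE ((dvd_of_mem_normalizedFactors hfq).trans hqd)
    rw [hT, Finset.mem_union, Multiset.mem_toFinset, Multiset.mem_toFinset] at hf
    rcases hf with hf | hf
    · exact key _ hp.ne_zero (Polynomial.map_dvd a hP1dvd) hf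
    · exact key _ hd.ne_zero (Polynomial.map_dvd a (Dvd.intro _ rfl)) hf
  have hT0 : ∀ f ∈ T, algebraMap K[X] (RatFunc K) f ≠ 0 := by
    intro f hf
    apply RatFunc.algebraMap_ne_zero
    rcases hTirr f hf with rfl | h
    · exact X_ne_zero
    · exact h.1.ne_zero
  have hd0 : rqPhi K D ≠ 0 := (map_ne_zero_iff _ rqPhi_inj).2 (rqM_monic hD).ne_zero
  have hphi : ∀ q, rqPhi K q = algebraMap K[X] (RatFunc K) (q.map a) := fun q => rfl
  have hprod : rqPhi K P1 / rqPhi K D = ∏ f ∈ T, (algebraMap K[X] (RatFunc K) f) ^ e f := by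
    rw [hphi, hphi, rq_prod hp (T := T) Finset.subset_union_left]
    conv_lhs => rw [rq_prod hd (T := T) Finset.subset_union_right]
    rw [map_prod, map_prod, ← Finset.prod_div_distrib]
    refine Finset.prod_congr rfl fun f hf => ?_
    rw [zpow_sub₀ (hT0 f hf), map_pow, map_pow, zpow_natCast, zpow_natCast]
  have hu : u = rqPhi K (C P.leadingCoeff) * (rqPhi K P1 / rqPhi K D) := by
    rw [← mul_div_assoc, ← map_mul, ← hP, ← h, mul_div_cancel_right₀ _ hd0]
  refine ⟨P.leadingCoeff, IsUnit.of_mul_eq_one _ hlc, if X ∈ T then e X else 0, T.erase X, e, ?_, ?_⟩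
  · intro f hf
    rw [Finset.mem_erase] at hf
    exact (hTirr f hf.2).resolve_left hf.1
  · rw [hu, hprod, rqPhi_C, mul_assoc]
    congr 1
    split_ifs with hX
    · rw [← Finset.mul_prod_erase _ _ hX, RatFunc.algebraMap_X]
    · rw [Finset.erase_eq_of_notMem hX, zpow_zero, one_mul]
end

/-- Let `K` be a number field contained in `ℚ(μ_∞)`. The units of the Rouquier
ring `R_K(y)` are exactly the elements of the form `u · yⁿ · Π_Φ Φ(y)^{n_Φ}` with `u` a unit of
`Z_K`, `n ∈ ℤ`, `Φ` ranging over finitely many `K`-cyclotomic polynomials and `n_Φ ∈ ℤ`. -/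
theorem rouquierRing_isUnit_iff (K : Type*) [Field K] [NumberField K]
    (hK : ∃ f : K →+* ℂ, ∀ x : K,
      f x ∈ Subfield.closure {z : ℂ | ∃ n : ℕ, 0 < n ∧ z ^ n = 1})
    (u : RatFunc K) :
    (u ∈ RouquierRing K ∧ ∃ v ∈ RouquierRing K, u * v = 1) ↔
      ∃ (w : NumberField.RingOfIntegers K) (_ : IsUnit w) (n : ℤ)
        (S : Finset (Polynomial K)) (e : Polynomial K → ℤ),
        (∀ Φ ∈ S, IsKCyclotomic Φ) ∧
        u = algebraMap K (RatFunc K) (algebraMap (NumberField.RingOfIntegers K) K w) *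
            RatFunc.X ^ n * ∏ Φ ∈ S, (algebraMap (Polynomial K) (RatFunc K) Φ) ^ (e Φ) := by
  constructor
  · rintro ⟨hu, v, hv, huv⟩
    exact rq_main u v hu hv huv
  · rintro ⟨w, hw, n, S, e, hS, rfl⟩
    have hC : ∀ a : NumberField.RingOfIntegers K,
        algebraMap K (RatFunc K) (algebraMap _ K a) ∈ RouquierRing K := fun a =>
      Subring.subset_closure (Or.inl (Or.inl ⟨_, ⟨a, rfl⟩, rfl⟩))
    have hX : (RatFunc.X : RatFunc K) ∈ RouquierRing K :=
      Subring.subset_closure (Or.inl (Or.inr (Or.inl rfl)))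
    have hX' : (RatFunc.X⁻¹ : RatFunc K) ∈ RouquierRing K :=
      Subring.subset_closure (Or.inl (Or.inr (Or.inr rfl)))
    have gen : ∀ (w : NumberField.RingOfIntegers K) (n : ℤ) (e : Polynomial K → ℤ),
        algebraMap K (RatFunc K) (algebraMap (NumberField.RingOfIntegers K) K w) *
            RatFunc.X ^ n * ∏ Φ ∈ S, (algebraMap (Polynomial K) (RatFunc K) Φ) ^ (e Φ)
          ∈ RouquierRing K := fun w n e =>
      mul_mem (mul_mem (hC w) (rq_zpow hX hX' n))
        (prod_mem fun Φ h => rq_zpow (rq_cyc (hS Φ h)).1 (rq_cyc (hS Φ h)).2 _)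
    obtain ⟨w', hw'⟩ := hw.exists_right_inv
    refine ⟨gen w n e, _, gen w' (-n) (fun Φ => - e Φ), ?_⟩
    have h1 : algebraMap K (RatFunc K) (algebraMap (NumberField.RingOfIntegers K) K w) *
        algebraMap K (RatFunc K) (algebraMap (NumberField.RingOfIntegers K) K w') = 1 := by
      rw [← map_mul, ← map_mul, hw', map_one, map_one]
    have h2 : (RatFunc.X : RatFunc K) ^ n * RatFunc.X ^ (-n) = 1 := by
      rw [← zpow_add₀ RatFunc.X_ne_zero, add_neg_cancel, zpow_zero]
    have h3 : (∏ Φ ∈ S, (algebraMap (Polynomial K) (RatFunc K) Φ) ^ (e Φ)) *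
        ∏ Φ ∈ S, (algebraMap (Polynomial K) (RatFunc K) Φ) ^ (- e Φ) = 1 := by
      rw [← Finset.prod_mul_distrib]
      refine Finset.prod_eq_one fun Φ h => ?_
      rw [← zpow_add₀ (RatFunc.algebraMap_ne_zero (hS Φ h).1.ne_zero), add_neg_cancel, zpow_zero]
    rw [mul_mul_mul_comm, mul_mul_mul_comm (algebraMap K (RatFunc K) _), h1, h2, h3, one_mul, one_mul]
end

section
/- Let K be a number field with ring of integers Z_K, let A := Z_K[v_1^{±1}, …, v_m^{±1}] be the Laurent polynomial ring in m variables over Z_K, let a = (a_1, …, a_m) ∈ ℤ^m with gcd(a_1, …, a_m) = 1, set M := v_1^{a_1} ⋯ v_m^{a_m}, and let p be a nonzero prime ideal of Z_K. Then the ideal q_M := (M − 1)·A + p·A of A is a prime ideal. -/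
open scoped TensorProduct

theorem laurent_aux {R : Type*} [CommRing R] (m : ℕ) (a b : Fin m → ℤ)
    (hb : ∑ i, a i * b i = 1) (p : Ideal R) (hp : p.IsPrime) :
    (Ideal.span {(AddMonoidAlgebra.single a 1 : AddMonoidAlgebra R (Fin m → ℤ)) - 1} ⊔
      Ideal.map (algebraMap R (AddMonoidAlgebra R (Fin m → ℤ))) p).IsPrime := by
  set q := (Ideal.span {(AddMonoidAlgebra.single a 1 : AddMonoidAlgebra R (Fin m → ℤ)) - 1} ⊔
      Ideal.map (algebraMap R (AddMonoidAlgebra R (Fin m → ℤ))) p) with hq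
  let φ : (Fin m → ℤ) →+ (Fin m → ℤ) :=
    { toFun := fun x => x - (∑ i, x i * b i) • a
      map_zero' := by simp
      map_add' := fun x y => by
        simp only [Pi.add_apply, add_mul, Finset.sum_add_distrib, add_smul]
        abel }
  have hφ : ∀ x, φ x = x - (∑ i, x i * b i) • a := fun _ => rfl
  have hφa : φ a = 0 := by rw [hφ, hb]; simp
  let D := AddMonoidAlgebra.mapDomainRingHom R φ
  let Φ := (AddMonoidAlgebra.mapRingHom (Fin m → ℤ) (Ideal.Quotient.mk p)).comp D
  have hM : ∀ n : ℤ, (AddMonoidAlgebra.single (n • a) 1 : AddMonoidAlgebra R (Fin m → ℤ)) - 1 ∈ q := by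
    have h1 : (AddMonoidAlgebra.single a 1 : AddMonoidAlgebra R (Fin m → ℤ)) - 1 ∈ q :=
      Ideal.mem_sup_left (Ideal.subset_span rfl)
    intro n
    induction n using Int.induction_on with
    | zero => simp [← AddMonoidAlgebra.one_def]
    | succ n ih =>
      have e : (AddMonoidAlgebra.single (((n : ℤ) + 1) • a) 1 : AddMonoidAlgebra R (Fin m → ℤ)) - 1
        = AddMonoidAlgebra.single ((n : ℤ) • a) 1 * (AddMonoidAlgebra.single a 1 - 1)
          + (AddMonoidAlgebra.single ((n : ℤ) • a) 1 - 1) := by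
        rw [mul_sub, AddMonoidAlgebra.single_mul_single, add_smul, one_smul]; simp
      rw [e]
      exact q.add_mem (q.mul_mem_left _ h1) ih
    | pred n ih =>
      have e : (AddMonoidAlgebra.single ((-(n : ℤ) - 1) • a) 1 : AddMonoidAlgebra R (Fin m → ℤ)) - 1
        = (AddMonoidAlgebra.single ((-(n : ℤ)) • a) 1 - 1) -
          AddMonoidAlgebra.single ((-(n : ℤ) - 1) • a) 1 * (AddMonoidAlgebra.single a 1 - 1) := by
        rw [mul_sub, AddMonoidAlgebra.single_mul_single, sub_smul, one_smul, sub_add_cancel]; simp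
      rw [e]
      exact q.sub_mem ih (q.mul_mem_left _ h1)
  have hD : ∀ f, f - D f ∈ q := by
    intro f
    induction f using AddMonoidAlgebra.induction_linear with
    | zero => simp
    | add f g hf hg =>
      rw [map_add, add_sub_add_comm]
      exact q.add_mem hf hg
    | single x c =>
      have e : (AddMonoidAlgebra.single x c : AddMonoidAlgebra R (Fin m → ℤ)) -
          D (AddMonoidAlgebra.single x c) = AddMonoidAlgebra.single (φ x) c *
          (AddMonoidAlgebra.single ((∑ i, x i * b i) • a) 1 - 1) := by
        rw [mul_sub, AddMonoidAlgebra.single_mul_single, hφ, sub_add_cancel]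
        simp [D, hφ]
      rw [e]
      exact q.mul_mem_left _ (hM _)
  have hker : RingHom.ker Φ = q := by
    apply le_antisymm
    · intro f hf
      have hg : D f ∈ q := by
        have h0 : ∀ x, (D f).coeff x ∈ p := by
          intro x
          have := congrArg (fun g => g.coeff x) (show Φ f = 0 from hf)
          rw [← Ideal.Quotient.eq_zero_iff_mem]
          simpa [Φ] using this
        rw [← AddMonoidAlgebra.sum_coeff_single (D f)]
        refine q.sum_mem fun x _ => ?_
        have e : (AddMonoidAlgebra.single x ((D f).coeff x) : AddMonoidAlgebra R (Fin m → ℤ)) =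
            algebraMap R _ ((D f).coeff x) * AddMonoidAlgebra.single x 1 := by
          simp
        rw [e]
        exact q.mul_mem_right _ (Ideal.mem_sup_right (Ideal.mem_map_of_mem _ (h0 x)))
      have := q.add_mem (hD f) hg
      simpa using this
    · refine sup_le ?_ ?_
      · rw [Ideal.span_singleton_le_iff_mem, RingHom.mem_ker, map_sub, map_one, sub_eq_zero]
        simp [Φ, D, hφa, ← AddMonoidAlgebra.one_def]
      · rw [Ideal.map_le_iff_le_comap]
        intro r hr
        have := Ideal.Quotient.eq_zero_iff_mem.mpr hr
        simp [Φ, D, RingHom.mem_ker, this]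
  rw [← hker]
  exact RingHom.ker_isPrime Φ

/-- Let `K` be a number field with ring of integers `Z_K`, let
`A := Z_K[v₁^{±1}, …, v_m^{±1}]` be the Laurent polynomial ring in `m` variables over `Z_K`
(realized as the monoid algebra of `ℤ^m` over `Z_K`), let `a ∈ ℤ^m` with `gcd(a₁, …, a_m) = 1`,
let `M := v₁^{a₁} ⋯ v_m^{a_m}` be the corresponding monomial, and let `p` be a nonzero prime
ideal of `Z_K`. Then the ideal `q_M := (M - 1)·A + p·A` is prime. -/
theorem laurent_essential_ideal_isPrime
    (K : Type*) [Field K] [NumberField K] (m : ℕ) (a : Fin m → ℤ)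
    (ha : Finset.univ.gcd a = 1)
    (p : Ideal (NumberField.RingOfIntegers K)) (hp0 : p ≠ ⊥) (hp : p.IsPrime) :
    (Ideal.span {(AddMonoidAlgebra.single a 1 :
          AddMonoidAlgebra (NumberField.RingOfIntegers K) (Fin m → ℤ)) - 1} ⊔
      Ideal.map (algebraMap (NumberField.RingOfIntegers K)
          (AddMonoidAlgebra (NumberField.RingOfIntegers K) (Fin m → ℤ))) p).IsPrime := by
  obtain ⟨b, hb⟩ := Finset.gcd_eq_sum_mul Finset.univ a
  rw [ha] at hb
  exact laurent_aux m a b hb.symm p hp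
end

section
/- Let G be a finite group. The only idempotents of the center of the integral group ring ℤ[G] are 0 and 1; that is, 1 is the unique block-idempotent of ℤ[G]. -/
theorem aux_trace (G : Type*) [Group G] [Fintype G] (e : MonoidAlgebra ℤ G) :
    LinearMap.trace ℤ _ (LinearMap.mulLeft ℤ e) = Fintype.card G * e.coeff 1 := by
  classical
  rw [LinearMap.trace_eq_matrix_trace ℤ (MonoidAlgebra.basis G ℤ)]
  have h : ∀ g : G, LinearMap.toMatrix (MonoidAlgebra.basis G ℤ) (MonoidAlgebra.basis G ℤ)
      (LinearMap.mulLeft ℤ e) g g = e.coeff 1 := by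
    intro g
    rw [LinearMap.toMatrix_apply]
    have h1 : MonoidAlgebra.basis G ℤ g = MonoidAlgebra.single g 1 := by
      simp
    rw [h1, LinearMap.mulLeft_apply]
    change (e * MonoidAlgebra.single g 1).coeff g = _
    simp
  simp only [Matrix.trace, Matrix.diag_apply, h]
  simp

theorem aux_idem (G : Type*) [Group G] [Fintype G] (e : MonoidAlgebra ℤ G)
    (h : IsIdempotentElem e) : 0 ≤ e.coeff 1 ∧ (e.coeff 1 = 0 → e = 0) := by
  have hF : Module.Free ℤ (MonoidAlgebra ℤ G) := Module.Free.of_basis (MonoidAlgebra.basis G ℤ)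
  have hM : Module.Finite ℤ (MonoidAlgebra ℤ G) := Module.Finite.of_basis (MonoidAlgebra.basis G ℤ)
  have hi : IsIdempotentElem (LinearMap.mulLeft ℤ e) := by
    ext1 x
    ext1
    simp [← mul_assoc, h.eq]
  have ht := aux_trace G e
  have hc : (0 : ℤ) < Fintype.card G := by exact_mod_cast Fintype.card_pos
  constructor
  · rw [(LinearMap.IsIdempotentElem.isProj_range _ hi).trace] at ht
    have : (0 : ℤ) ≤ Fintype.card G * e.coeff 1 := by rw [← ht]; positivity
    exact nonneg_of_mul_nonneg_right this hc
  · intro h0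
    rw [h0, mul_zero] at ht
    have := (LinearMap.IsIdempotentElem.trace_eq_zero_iff hi).1 ht
    simpa using congrArg (fun f => f 1) this

/-- Let `G` be a finite group. The only idempotents of the center of the
integral group ring `ℤ[G]` are `0` and `1`; that is, `1` is the unique block-idempotent
of `ℤ[G]`. -/
theorem center_idempotent_eq_zero_or_one_of_intGroupRing
    (G : Type*) [Group G] [Finite G] (e : MonoidAlgebra ℤ G)
    (he : e ∈ Subring.center (MonoidAlgebra ℤ G)) (hidem : IsIdempotentElem e) :
    e = 0 ∨ e = 1 := by
  have := Fintype.ofFinite G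
  obtain ⟨h1, h2⟩ := aux_idem G e hidem
  obtain ⟨h3, h4⟩ := aux_idem G (1 - e) hidem.one_sub
  have h5 : (1 - e).coeff 1 = 1 - e.coeff 1 := by
    simp
  rw [h5] at h3 h4
  rcases eq_or_ne (e.coeff 1) 0 with h | h
  · exact Or.inl (h2 h)
  · exact Or.inr (sub_eq_zero.1 (h4 (by omega))).symm
end
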